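/- Let (X, σ_X) and (Y, σ_Y) be one-sided subshifts with Y a factor of X via a one-block factor map π, let a = (a_1, a_2) with a_1 > 0 and a_2 ≥ 0, and let Φ ∈ C_sa(X, σ_X) be generated by a sub-multiplicative φ : L(X) → [0,∞); define φ^{(2)}(J) = ( Σ_{I ∈ L_n(X), πI = J} φ(I)^{1/a_1} )^{a_1} for J ∈ L_n(Y) and let Φ^{(2)} be generated by φ^{(2)}. Then: (ii) I(Φ, a) is a non-empty compact convex set and each of its extreme points is ergodic; (iii) I(Φ, a) is a singleton if and only if I( (1/(a_1+a_2)) Φ^{(2)} ) is a singleton {ν} and I_ν( (1/a_1) Φ ) contains a unique ergodic measure. -/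

import Mathlib

open MeasureTheory Filter Topology
open scoped Classical ENNReal NNReal

noncomputable section

/-- The left shift on one-sided sequences. -/
def shiftMap {A : Type} : (ℕ → A) → (ℕ → A) := fun x n => x (n + 1)

/-- The cylinder set of a finite word. -/
def cyl {A : Type} (I : List A) : Set (ℕ → A) :=
  {x | ∀ i : Fin I.length, x i = I.get i}

/-- Membership of a word in the language of `X`. -/
def Lang {A : Type} (X : Set (ℕ → A)) (I : List A) : Prop :=
  (cyl I ∩ X).Nonempty

/-- `X` is a (nonempty) one-sided subshift. -/
def IsSubshift {A : Type} [TopologicalSpace A] (X : Set (ℕ → A)) : Prop :=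
  X.Nonempty ∧ IsCompact X ∧ shiftMap '' X ⊆ X

/-- weak `p`-specification -/
def WeakSpecification {A : Type} (X : Set (ℕ → A)) (p : ℕ) : Prop :=
  ∀ I J : List A, Lang X I → Lang X J →
    ∃ K : List A, K.length ≤ p ∧ Lang X (I ++ K ++ J)

/-- `p`-specification -/
def Specification {A : Type} (X : Set (ℕ → A)) (p : ℕ) : Prop :=
  ∀ I J : List A, Lang X I → Lang X J →
    ∃ K : List A, K.length = p ∧ Lang X (I ++ K ++ J)

/-- invariant probability measures supported on `X` (predicate on plain measures) -/
def InvOn {A : Type} [MeasurableSpace A] (X : Set (ℕ → A)) (μ : Measure (ℕ → A)) : Prop :=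
  IsProbabilityMeasure μ ∧ μ.map shiftMap = μ ∧ μ X = 1

/-- the set of shift-invariant probability measures on `X` -/
def MInv {A : Type} [MeasurableSpace A] (X : Set (ℕ → A)) :
    Set (ProbabilityMeasure (ℕ → A)) :=
  {μ | (μ : Measure (ℕ → A)).map shiftMap = (μ : Measure (ℕ → A)) ∧
    (μ : Measure (ℕ → A)) X = 1}

/-- measure of a word: `μ([I] ∩ X)` -/
def mw {A : Type} [MeasurableSpace A] (X : Set (ℕ → A)) (μ : Measure (ℕ → A))
    (I : List A) : ℝ :=
  (μ (cyl I ∩ X)).toReal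

/-- the initial word of length `n` of a sequence -/
def wordOf {A : Type} (x : ℕ → A) (n : ℕ) : List A := List.ofFn (fun i : Fin n => x i)

/-- `n`-block entropy -/
def Hblock {A : Type} [Fintype A] [MeasurableSpace A] (X : Set (ℕ → A))
    (μ : Measure (ℕ → A)) (n : ℕ) : ℝ :=
  -∑ w : Fin n → A, mw X μ (List.ofFn w) * Real.log (mw X μ (List.ofFn w))

/-- measure-theoretic entropy (the limit exists for invariant measures; `liminf` realizes it) -/
def ent {A : Type} [Fintype A] [MeasurableSpace A] (X : Set (ℕ → A))
    (μ : Measure (ℕ → A)) : ℝ :=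
  liminf (fun n : ℕ => Hblock X μ n / n) atTop

/-- extended logarithm: `log t`, with value `⊥` for `t ≤ 0` -/
def elog (t : ℝ) : EReal := if t ≤ 0 then ⊥ else ((Real.log t : ℝ) : EReal)

/-- the integral `∫ log g dμ`, valued in `ℝ ∪ {−∞}` -/
def intlog {Ω : Type*} [MeasurableSpace Ω] (μ : Measure Ω) (g : Ω → ℝ) : EReal :=
  ((∫⁻ x, ENNReal.ofReal (Real.log (g x)) ∂μ : ℝ≥0∞) : EReal) -
    ((∫⁻ x, (if g x ≤ 0 then (⊤ : ℝ≥0∞) else ENNReal.ofReal (-Real.log (g x))) ∂μ : ℝ≥0∞) : EReal)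

/-- sub-additive potential `Φ = (log φ_n)_{n ≥ 1}` -/
def SubaddPot {A : Type} [TopologicalSpace A] (X : Set (ℕ → A))
    (φ : ℕ → (ℕ → A) → ℝ) : Prop :=
  (∀ n, 1 ≤ n → ContinuousOn (φ n) X) ∧
  (∀ n, 1 ≤ n → ∀ x ∈ X, 0 ≤ φ n x) ∧
  ∃ c > (0:ℝ), ∀ n m : ℕ, 1 ≤ n → 1 ≤ m → ∀ x ∈ X,
    φ (n + m) x ≤ c * φ n x * φ m (shiftMap^[n] x)

/-- `Φ_*(μ) = lim (1/n) ∫ log φ_n dμ` (realized as a `liminf` in `EReal`) -/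
def PhiStar {A : Type} [MeasurableSpace A] (μ : Measure (ℕ → A))
    (φ : ℕ → (ℕ → A) → ℝ) : EReal :=
  liminf (fun n : ℕ => (((n : ℝ)⁻¹ : ℝ) : EReal) * intlog μ (φ n)) atTop

/-- sub-multiplicative function on the language of `X` -/
def Submult {A : Type} (X : Set (ℕ → A)) (φ : List A → ℝ) : Prop :=
  (∀ I, Lang X I → 0 ≤ φ I) ∧ φ [] = 1 ∧
  ∃ c > (0:ℝ), ∀ I J : List A, Lang X (I ++ J) → φ (I ++ J) ≤ c⁻¹ * φ I * φ J

/-- the potential generated by a word function -/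
def genPot {A : Type} (φ : List A → ℝ) : ℕ → (ℕ → A) → ℝ := fun n x => φ (wordOf x n)

/-- the scaled potential `cΦ = (log φ_n^c)` -/
def scPot {Ω : Type*} (c : ℝ) (φ : ℕ → Ω → ℝ) : ℕ → Ω → ℝ := fun n x => φ n x ^ c

/-- the "pressure value" `Φ_*(μ) + h_μ` -/
def eqVal {A : Type} [Fintype A] [MeasurableSpace A] (X : Set (ℕ → A))
    (φ : ℕ → (ℕ → A) → ℝ) (μ : ProbabilityMeasure (ℕ → A)) : EReal :=
  PhiStar (μ : Measure (ℕ → A)) φ + ((ent X (μ : Measure (ℕ → A)) : ℝ) : EReal)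

/-- the set of equilibrium states of `Φ` -/
def EqSet {A : Type} [Fintype A] [MeasurableSpace A] (X : Set (ℕ → A))
    (φ : ℕ → (ℕ → A) → ℝ) : Set (ProbabilityMeasure (ℕ → A)) :=
  {μ | μ ∈ MInv X ∧ eqVal X φ μ = ⨆ η ∈ MInv X, eqVal X φ η}

/-- sequence map induced by a one-block map -/
def blockMap {A B : Type} (π : A → B) : (ℕ → A) → (ℕ → B) := fun x n => π (x n)

/-- pushforward of a probability measure under a one-block map -/
def pushM {A B : Type} [MeasurableSpace A] [MeasurableSpace B] (π : A → B)
    (μ : ProbabilityMeasure (ℕ → A)) : Measure (ℕ → B) :=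
  (μ : Measure (ℕ → A)).map (blockMap π)

/-- conditional equilibrium states of `Φ` over `ν` -/
def CondEqSet {A B : Type} [Fintype A] [MeasurableSpace A] [MeasurableSpace B]
    (X : Set (ℕ → A)) (π : A → B) (φ : ℕ → (ℕ → A) → ℝ) (ν : Measure (ℕ → B)) :
    Set (ProbabilityMeasure (ℕ → A)) :=
  {μ | μ ∈ MInv X ∧ pushM π μ = ν ∧
    eqVal X φ μ = ⨆ η ∈ {η | η ∈ MInv X ∧ pushM π η = ν}, eqVal X φ η}

/-- the projected word function `ψ(J) = Σ_{I : πI = J} φ(I)` -/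
def psiProj {A B : Type} [Fintype A] (X : Set (ℕ → A)) (π : A → B) (φ : List A → ℝ)
    (J : List B) : ℝ :=
  ∑ w : Fin J.length → A,
    if Lang X (List.ofFn w) ∧ List.map π (List.ofFn w) = J then φ (List.ofFn w) else 0

/-- `φ^{(2)}(J) = (Σ_{I : πI = J} φ(I)^{1/a₁})^{a₁}` -/
def phiTwo {A B : Type} [Fintype A] (X : Set (ℕ → A)) (π : A → B) (φ : List A → ℝ)
    (a₁ : ℝ) (J : List B) : ℝ :=
  (∑ w : Fin J.length → A,
    if Lang X (List.ofFn w) ∧ List.map π (List.ofFn w) = J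
    then φ (List.ofFn w) ^ a₁⁻¹ else 0) ^ a₁

/-- `a`-weighted pressure value for `k = 2` -/
def wVal2 {A B : Type} [Fintype A] [Fintype B] [MeasurableSpace A] [MeasurableSpace B]
    (X : Set (ℕ → A)) (Y : Set (ℕ → B)) (π : A → B) (φ : ℕ → (ℕ → A) → ℝ)
    (a₁ a₂ : ℝ) (μ : ProbabilityMeasure (ℕ → A)) : EReal :=
  PhiStar (μ : Measure (ℕ → A)) φ +
    ((a₁ * ent X (μ : Measure (ℕ → A)) + a₂ * ent Y (pushM π μ) : ℝ) : EReal)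

/-- the set of `a`-weighted equilibrium states, `k = 2` -/
def WEqSet2 {A B : Type} [Fintype A] [Fintype B] [MeasurableSpace A] [MeasurableSpace B]
    (X : Set (ℕ → A)) (Y : Set (ℕ → B)) (π : A → B) (φ : ℕ → (ℕ → A) → ℝ)
    (a₁ a₂ : ℝ) : Set (ProbabilityMeasure (ℕ → A)) :=
  {μ | μ ∈ MInv X ∧ wVal2 X Y π φ a₁ a₂ μ = ⨆ η ∈ MInv X, wVal2 X Y π φ a₁ a₂ η}

/-- convexity of a set of probability measures -/
def ConvexPM {Ω : Type*} [MeasurableSpace Ω] (S : Set (ProbabilityMeasure Ω)) : Prop :=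
  ∀ μ₁ ∈ S, ∀ μ₂ ∈ S, ∀ t : ℝ, 0 ≤ t → t ≤ 1 → ∀ μ : ProbabilityMeasure Ω,
    (μ : Measure Ω) = ENNReal.ofReal t • (μ₁ : Measure Ω) +
      ENNReal.ofReal (1 - t) • (μ₂ : Measure Ω) → μ ∈ S

/-- extreme points of a set of probability measures -/
def IsExtremePM {Ω : Type*} [MeasurableSpace Ω] (S : Set (ProbabilityMeasure Ω))
    (μ : ProbabilityMeasure Ω) : Prop :=
  μ ∈ S ∧ ∀ μ₁ ∈ S, ∀ μ₂ ∈ S, ∀ t : ℝ, 0 < t → t < 1 →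
    (μ : Measure Ω) = ENNReal.ofReal t • (μ₁ : Measure Ω) +
      ENNReal.ofReal (1 - t) • (μ₂ : Measure Ω) → μ₁ = μ₂

/-- the class `Ω_w(A*, p)` -/
def OmegaW {A : Type} [Fintype A] (p : ℕ) (f : List A → ℝ) : Prop :=
  (∀ I, 0 ≤ f I ∧ f I ≤ 1) ∧
  ∃ c > (0:ℝ),
    (∀ n : ℕ, ∑ w : Fin n → A, f (List.ofFn w) = 1) ∧
    (∀ I J : List A, ∃ K : List A, K.length ≤ p ∧ c * (f I * f J) ≤ f (I ++ K ++ J)) ∧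
    (∀ I : List A, ∃ i j : A, c * f I ≤ f (i :: I) ∧ c * f I ≤ f (I ++ [j]))

/-- the class `Ω(A*, p)` -/
def OmegaS {A : Type} [Fintype A] (p : ℕ) (f : List A → ℝ) : Prop :=
  (∀ I, 0 ≤ f I ∧ f I ≤ 1) ∧
  ∃ c > (0:ℝ),
    (∀ n : ℕ, ∑ w : Fin n → A, f (List.ofFn w) = 1) ∧
    (∀ I J : List A, ∃ K : List A, K.length = p ∧ c * (f I * f J) ≤ f (I ++ K ++ J))

/-- `f_{m,n}(I)` -/
def fmn {A : Type} [Fintype A] (f : List A → ℝ) (m n : ℕ) (I : List A) : ℝ :=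
  ∑ u : Fin m → A, ∑ v : Fin n → A, f (List.ofFn u ++ I ++ List.ofFn v)

/-- `f*(I) = sup_{m,n} f_{m,n}(I)` -/
def fstar {A : Type} [Fintype A] (f : List A → ℝ) (I : List A) : ℝ :=
  ⨆ m : ℕ, ⨆ n : ℕ, fmn f m n I

/-- the class `D_w(X, p)` -/
def Dw {A : Type} (X : Set (ℕ → A)) (p : ℕ) (φ : List A → ℝ) : Prop :=
  (∀ I, Lang X I → 0 ≤ φ I) ∧ (∃ I, Lang X I ∧ I ≠ [] ∧ 0 < φ I) ∧
  ∃ c : ℝ, 0 < c ∧ c ≤ 1 ∧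
    (∀ I J : List A, Lang X (I ++ J) → φ (I ++ J) ≤ c⁻¹ * φ I * φ J) ∧
    (∀ I J : List A, Lang X I → Lang X J →
      ∃ K : List A, K.length ≤ p ∧ Lang X (I ++ K ++ J) ∧
        c * (φ I * φ J) ≤ φ (I ++ K ++ J))

/-- the class `D(X, p)` -/
def Ds {A : Type} (X : Set (ℕ → A)) (p : ℕ) (φ : List A → ℝ) : Prop :=
  (∀ I, Lang X I → 0 ≤ φ I) ∧ (∃ I, Lang X I ∧ I ≠ [] ∧ 0 < φ I) ∧
  ∃ c : ℝ, 0 < c ∧ c ≤ 1 ∧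
    (∀ I J : List A, Lang X (I ++ J) → φ (I ++ J) ≤ c⁻¹ * φ I * φ J) ∧
    (∀ I J : List A, Lang X I → Lang X J →
      ∃ K : List A, K.length = p ∧ Lang X (I ++ K ++ J) ∧
        c * (φ I * φ J) ≤ φ (I ++ K ++ J))

end

noncomputable section

/-- iterated one-block maps along a chain of alphabets: `tauFrom π j i : B j → B (j+i)` -/
def tauFrom {B : ℕ → Type} (π : ∀ i, B i → B (i+1)) (j : ℕ) : (i : ℕ) → B j → B (j + i)
  | 0 => id
  | (i+1) => fun a => π (j + i) (tauFrom π j i a)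

/-- weighted pressure value along a chain starting at index `j`, with `k` weights `w 0, …, w (k-1)` -/
def wValGen {B : ℕ → Type} [∀ i, Fintype (B i)] [∀ i, MeasurableSpace (B i)]
    (π : ∀ i, B i → B (i+1)) (X : ∀ i, Set (ℕ → B i)) (j k : ℕ) (w : ℕ → ℝ)
    (φ : ℕ → (ℕ → B j) → ℝ) (μ : ProbabilityMeasure (ℕ → B j)) : EReal :=
  PhiStar (μ : Measure (ℕ → B j)) φ +
    ((∑ i ∈ Finset.range k, w i *
      ent (X (j + i)) ((μ : Measure (ℕ → B j)).map (blockMap (tauFrom π j i))) : ℝ) : EReal)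

/-- weighted equilibrium states along a chain -/
def wEqSetGen {B : ℕ → Type} [∀ i, Fintype (B i)] [∀ i, MeasurableSpace (B i)]
    (π : ∀ i, B i → B (i+1)) (X : ∀ i, Set (ℕ → B i)) (j k : ℕ) (w : ℕ → ℝ)
    (φ : ℕ → (ℕ → B j) → ℝ) : Set (ProbabilityMeasure (ℕ → B j)) :=
  {μ | μ ∈ MInv (X j) ∧
    wValGen π X j k w φ μ = ⨆ η ∈ MInv (X j), wValGen π X j k w φ η}

end

/-!
Put `f = φ ^ (1/a₁)` on the language of `X`, and let `ψ(J)` be the sum of `f` over the words above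
`J`, so that `φ^{(2)} = ψ ^ a₁`. Gibbs' inequality on the words above each block gives
`f_*(μ) + h_μ ≤ ψ_*(ν) + h_ν` whenever `μ` lies over `ν`. Conversely, given `ν`, spread the mass of
each block `J` over the words above `J` proportionally to `f`, extend the resulting weights to
measures and average along the shift; by subadditivity every limit point attains the bound over `ν`.

The weighted functional of `μ` is `a₁ (f_*(μ) + h_μ) + a₂ h_ν`, hence it can be maximized first over
the fibre of `ν` and then over `ν`: `μ` is a weighted equilibrium state iff it is a conditional
equilibrium state of `(1/a₁)Φ` over some `ν` maximizing `a₁ (ψ_*(ν) + h_ν) + a₂ h_ν`, that is, over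
an equilibrium state of `(1/(a₁+a₂))Φ^{(2)}`.

Both `Φ_*` and the entropy are affine and, as limits of subadditive sequences, upper
semicontinuous, so the weighted equilibrium states form a compact face of the simplex of invariant
measures. Its extreme points are extreme invariant measures, hence ergodic. If `ν` is the
only equilibrium state downstairs and there is a unique ergodic conditional equilibrium state over
`ν`, the face has a single extreme point and is a singleton by the Krein-Milman theorem.
-/

/-! ### Finite sums and subadditive sequences -/

lemma mul_negMulLog_div {p f : ℝ} (h : f = 0 → p = 0) :
    f * Real.negMulLog (p / f) = Real.negMulLog p + p * Real.log f := by
  rcases eq_or_ne f 0 with hf | hf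
  · simp [hf, h hf]
  rcases eq_or_ne p 0 with rfl | hp
  · simp
  rw [Real.negMulLog, Real.log_div hp hf, Real.negMulLog]
  field_simp
  ring

/-- The log-sum inequality, as Jensen's inequality for `negMulLog` at the points `p a / f a` with
weights `f a`. -/
lemma sum_negMulLog_add_mul_log_le {α : Type*} (s : Finset α) {p f : α → ℝ}
    (hp : ∀ a ∈ s, 0 ≤ p a) (hf : ∀ a ∈ s, 0 ≤ f a) (h0 : ∀ a ∈ s, f a = 0 → p a = 0) :
    ∑ a ∈ s, (Real.negMulLog (p a) + p a * Real.log (f a)) ≤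
      Real.negMulLog (∑ a ∈ s, p a) + (∑ a ∈ s, p a) * Real.log (∑ a ∈ s, f a) := by
  set F := ∑ a ∈ s, f a
  have hF : 0 ≤ F := Finset.sum_nonneg hf
  have hF0 : F = 0 → ∑ a ∈ s, p a = 0 := fun h =>
    Finset.sum_eq_zero fun a ha => h0 a ha ((Finset.sum_eq_zero_iff_of_nonneg hf).1 h a ha)
  rw [← mul_negMulLog_div hF0,
    ← Finset.sum_congr rfl fun a ha => mul_negMulLog_div (h0 a ha)]
  rcases hF.eq_or_lt with hF' | hF'
  · rw [← hF', zero_mul]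
    exact (Finset.sum_eq_zero fun a ha => by
      rw [(Finset.sum_eq_zero_iff_of_nonneg hf).1 hF'.symm a ha, zero_mul]).le
  have jensen := Real.concaveOn_negMulLog.le_map_sum (t := s) (w := fun a => f a / F)
    (p := fun a => p a / f a) (fun a ha => div_nonneg (hf a ha) hF)
    (by rw [← Finset.sum_div, div_self hF'.ne']) fun a ha => div_nonneg (hp a ha) (hf a ha)
  have barycenter : ∑ a ∈ s, f a / F * (p a / f a) = (∑ a ∈ s, p a) / F := by
    rw [Finset.sum_div]
    refine Finset.sum_congr rfl fun a ha => ?_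
    rcases eq_or_ne (f a) 0 with h | h
    · simp [h, h0 a ha h]
    · field_simp
  simp only [smul_eq_mul, barycenter] at jensen
  calc ∑ a ∈ s, f a * Real.negMulLog (p a / f a)
      = F * ∑ a ∈ s, f a / F * Real.negMulLog (p a / f a) := by
        rw [Finset.mul_sum]
        exact Finset.sum_congr rfl fun a _ => by field_simp
    _ ≤ F * Real.negMulLog ((∑ a ∈ s, p a) / F) := mul_le_mul_of_nonneg_left jensen hF

lemma sum_negMulLog_le_add_marginals {α β : Type*} [Fintype α] [Fintype β] {P : α → β → ℝ}
    (hP : ∀ a b, 0 ≤ P a b) (hsum : ∑ a, ∑ b, P a b = 1) :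
    ∑ a, ∑ b, Real.negMulLog (P a b) ≤
      ∑ a, Real.negMulLog (∑ b, P a b) + ∑ b, Real.negMulLog (∑ a, P a b) := by
  set p : α → ℝ := fun a => ∑ b, P a b
  set q : β → ℝ := fun b => ∑ a, P a b
  have hq : ∑ b, q b = 1 := by rw [Finset.sum_comm]; exact hsum
  have le_p : ∀ a b, P a b ≤ p a := fun a b =>
    Finset.single_le_sum (fun b _ => hP a b) (Finset.mem_univ b)
  have le_q : ∀ a b, P a b ≤ q b := fun a b =>
    Finset.single_le_sum (f := fun a => P a b) (fun a _ => hP a b) (Finset.mem_univ a)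
  have null : ∀ a b, p a = 0 ∨ q b = 0 → P a b = 0 := fun a b h =>
    (hP a b).antisymm' (h.elim (fun h => h ▸ le_p a b) fun h => h ▸ le_q a b)
  have logsum := sum_negMulLog_add_mul_log_le (Finset.univ : Finset (α × β))
    (p := fun x => P x.1 x.2) (f := fun x => p x.1 * q x.2) (fun x _ => hP _ _)
    (fun x _ => mul_nonneg ((hP x.1 x.2).trans (le_p _ _)) ((hP x.1 x.2).trans (le_q _ _)))
    fun x _ h => null _ _ (mul_eq_zero.1 h)
  have log_mul : ∀ a b, P a b * Real.log (p a * q b) =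
      P a b * Real.log (p a) + P a b * Real.log (q b) := fun a b => by
    by_cases h : p a = 0 ∨ q b = 0
    · simp [null a b h]
    · push Not at h
      rw [Real.log_mul h.1 h.2, mul_add]
  have sum_p : ∑ a, ∑ b, P a b * Real.log (p a) = -∑ a, Real.negMulLog (p a) := by
    simp [← Finset.sum_mul, Real.negMulLog, p]
  have sum_q : ∑ a, ∑ b, P a b * Real.log (q b) = -∑ b, Real.negMulLog (q b) := by
    rw [Finset.sum_comm]
    simp [← Finset.sum_mul, Real.negMulLog, q]
  simp only [Fintype.sum_prod_type, log_mul, Finset.sum_add_distrib, sum_p, sum_q,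
    ← Finset.mul_sum, hq, p, hsum, mul_one, Real.negMulLog_one, Real.log_one] at logsum
  linarith

/-- The entropy-plus-energy balance of a fibre over which the mass `q` is distributed in proportion
to the weights `f`, with total weight `F`: equality in the log-sum inequality. -/
lemma sum_negMulLog_add_mul_log_of_proportional {α : Type*} (s : Finset α) {f : α → ℝ} {q : ℝ}
    (h0 : ∑ a ∈ s, f a = 0 → q = 0) :
    ∑ a ∈ s, (Real.negMulLog (q * (f a / ∑ b ∈ s, f b)) +
        q * (f a / ∑ b ∈ s, f b) * Real.log (f a)) =
      Real.negMulLog q + q * Real.log (∑ a ∈ s, f a) := by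
  set F := ∑ b ∈ s, f b
  rcases eq_or_ne F 0 with hF | hF
  · simp [hF, h0 hF]
  have ratio : ∀ a, f a * Real.negMulLog (q * (f a / F) / f a) =
      f a / F * (F * Real.negMulLog (q / F)) := fun a => by
    rcases eq_or_ne (f a) 0 with h | h
    · simp [h]
    · rw [show q * (f a / F) / f a = q / F by field_simp]
      field_simp
  rw [Finset.sum_congr rfl fun a _ =>
      (mul_negMulLog_div (p := q * (f a / F)) (f := f a) (by simp +contextual)).symm,
    Finset.sum_congr rfl fun a _ => ratio a, ← Finset.sum_mul, ← Finset.sum_div, div_self hF,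
    one_mul, mul_negMulLog_div h0]

lemma sum_ite_lt_add_le (l n : ℕ) {c : ℝ} (hc : 0 ≤ c) :
    ∑ i ∈ Finset.range n, (if n < i + l then c else 0) ≤ l * c := by
  rw [← Finset.sum_filter, Finset.sum_const, nsmul_eq_mul]
  refine mul_le_mul_of_nonneg_right ?_ hc
  have subset : (Finset.range n).filter (fun i => n < i + l) ⊆ Finset.Ico (n - l) n :=
    fun i hi => by
      simp only [Finset.mem_filter, Finset.mem_range, Finset.mem_Ico] at hi ⊢
      omega
  have card_le := Finset.card_le_card subset
  rw [Nat.card_Ico] at card_le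
  exact_mod_cast card_le.trans (by omega)

/-- Cutting `[0, n)` into consecutive intervals of length `l`, starting at each of the `l` possible
phases, and averaging over the phases. -/
lemma mul_le_sum_of_subadditive {a : ℕ → ℕ → ℝ} {l n : ℕ} (hln : l ≤ n) {C K : ℝ} (hC : 0 ≤ C)
    (hsub : ∀ i p q, i + p + q ≤ n → a i (p + q) ≤ a i p + a (i + p) q + C)
    (hK : ∀ i p, p ≤ l → |a i p| ≤ K) :
    l * a 0 n ≤ ∑ k ∈ Finset.range n, a k l + n * C + l * (5 * K + C) := by
  have hK0 : 0 ≤ K := (abs_nonneg _).trans (hK 0 0 (Nat.zero_le _))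
  have le_K : ∀ {i p}, p ≤ l → a i p ≤ K := fun h => (abs_le.1 (hK _ _ h)).2
  have neg_le : ∀ {i p}, p ≤ l → -K ≤ a i p := fun h => (abs_le.1 (hK _ _ h)).1
  -- For `i > n` truncated subtraction makes `b i = a i 0`.
  set b : ℕ → ℝ := fun i => a i (n - i)
  have step : ∀ i ∈ Finset.range n,
      b i ≤ a i l + b (l + i) + C + if n < i + l then 3 * K else 0 := by
    intro i hi
    have hin := Finset.mem_range.1 hi
    split_ifs with h
    · have : n - (l + i) ≤ l := by omega
      have : b i ≤ K := le_K (by omega)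
      linarith [neg_le (i := i) (le_refl l),
        show -K ≤ b (l + i) from neg_le (by omega)]
    · have := hsub i l (n - i - l) (by omega)
      rw [show l + (n - i - l) = n - i by omega, add_comm i l,
        show n - i - l = n - (l + i) by omega] at this
      simpa only [b, add_zero] using this
  have boundary := sum_ite_lt_add_le l n (c := 3 * K) (by positivity)
  have phases : l * (a 0 n - K - C) ≤ ∑ i ∈ Finset.range l, b i := by
    conv_lhs => rw [← Finset.card_range l, ← nsmul_eq_mul]
    refine Finset.card_nsmul_le_sum _ _ _ fun i hi => ?_
    have hil := Finset.mem_range.1 hi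
    have := hsub 0 i (n - i) (by omega)
    rw [show i + (n - i) = n by omega, zero_add] at this
    linarith [le_K (i := 0) hil.le, show b i = a i (n - i) from rfl]
  have tail : ∑ i ∈ Finset.range l, b (n + i) ≤ l * K := by
    conv_rhs => rw [← Finset.card_range l, ← nsmul_eq_mul]
    exact Finset.sum_le_card_nsmul _ _ _ fun i _ => le_K (by omega)
  have split : ∑ i ∈ Finset.range n, b i + ∑ i ∈ Finset.range l, b (n + i) =
      ∑ i ∈ Finset.range l, b i + ∑ i ∈ Finset.range n, b (l + i) := by
    rw [← Finset.sum_range_add, ← Finset.sum_range_add, add_comm]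
  have total := Finset.sum_le_sum step
  simp only [Finset.sum_add_distrib, Finset.sum_const, Finset.card_range, nsmul_eq_mul] at total
  linarith

/-- The linear growth rate `lim w n / n` of a sequence that is subadditive up to the constant `C`,
encoded through Fekete's lemma as an infimum so that it makes sense in `EReal`. -/
noncomputable def growthRate (w : ℕ → ℝ) (C : ℝ) : EReal :=
  ⨅ (n : ℕ) (_ : 0 < n), (((w n + C) / n : ℝ) : EReal)

lemma coe_le_growthRate_iff {w : ℕ → ℝ} {C r : ℝ} :
    (r : EReal) ≤ growthRate w C ↔ ∀ n : ℕ, 0 < n → n * r ≤ w n + C := by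
  simp only [growthRate, le_iInf_iff, EReal.coe_le_coe_iff]
  refine forall₂_congr fun n hn => ?_
  rw [le_div_iff₀ (Nat.cast_pos.2 hn), mul_comm]

lemma growthRate_ne_top (w : ℕ → ℝ) (C : ℝ) : growthRate w C ≠ ⊤ :=
  ((iInf₂_le 1 one_pos).trans_lt (EReal.coe_lt_top _)).ne

lemma tendsto_growthRate {w : ℕ → ℝ} {C : ℝ} (hw : ∀ n m, w (n + m) ≤ w n + w m + C) :
    Tendsto (fun n : ℕ => ((w n / n : ℝ) : EReal)) atTop (𝓝 (growthRate w C)) := by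
  have hsub : Subadditive fun n => w n + C := fun n m => by linarith [hw n m]
  have hC : Tendsto (fun n : ℕ => C / (n : ℝ)) atTop (𝓝 0) :=
    tendsto_const_div_atTop_nhds_zero_nat C
  refine tendsto_order.2 ⟨fun a ha => ?_, fun a ha => ?_⟩
  · obtain ⟨r, har, hr⟩ := EReal.lt_iff_exists_real_btwn.1 ha
    obtain ⟨s, hrs, hs⟩ := EReal.lt_iff_exists_real_btwn.1 hr
    rw [EReal.coe_lt_coe_iff] at hrs
    filter_upwards [hC.eventually_lt_const (sub_pos.2 hrs), eventually_gt_atTop 0] with n hn hn0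
    refine har.trans (EReal.coe_lt_coe_iff.2 ?_)
    have := coe_le_growthRate_iff.1 hs.le n hn0
    rw [mul_comm, ← le_div_iff₀ (Nat.cast_pos.2 hn0), add_div] at this
    linarith
  · obtain ⟨r, hr, hra⟩ := EReal.lt_iff_exists_real_btwn.1 ha
    obtain ⟨s, hs, hsr⟩ := EReal.lt_iff_exists_real_btwn.1 hr
    rw [EReal.coe_lt_coe_iff] at hsr
    obtain ⟨m, hm, hms⟩ : ∃ m : ℕ, 0 < m ∧ (w m + C) / m < s := by
      by_contra! h
      exact hs.not_ge (le_iInf₂ fun n hn => EReal.coe_le_coe_iff.2 (h n hn))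
    filter_upwards [hsub.eventually_div_lt_of_div_lt hm.ne' hms,
      hC.eventually_const_lt (sub_neg.2 hsr)] with n hn hn'
    refine (EReal.coe_lt_coe_iff.2 ?_).trans hra
    rw [add_div] at hn
    linarith

/-! ### Blocks -/

section Block

variable {A : Type}

/-- The block of length `n` of a sequence starting at coordinate `i`, as a function on `Fin n`. -/
def block (i n : ℕ) (x : ℕ → A) : Fin n → A := fun k => x (i + k)

lemma block_preimage_append (i n m : ℕ) (u : Fin n → A) (v : Fin m → A) :
    block i (n + m) ⁻¹' {Fin.append u v} = block i n ⁻¹' {u} ∩ block (i + n) m ⁻¹' {v} := by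
  ext x
  simp only [Set.mem_preimage, Set.mem_singleton_iff, Set.mem_inter_iff]
  constructor
  · refine fun h => ⟨funext fun k => ?_, funext fun k => ?_⟩
    · simpa only [block, Fin.append_left, Fin.val_castAdd] using congrFun h (Fin.castAdd m k)
    · simpa only [block, Fin.append_right, Fin.val_natAdd, add_assoc] using
        congrFun h (Fin.natAdd n k)
  · rintro ⟨rfl, rfl⟩
    refine funext fun k => Fin.addCases (fun k => ?_) (fun k => ?_) k
    · simp only [Fin.append_left, block, Fin.val_castAdd]
    · simp only [Fin.append_right, block, Fin.val_natAdd, add_assoc]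

lemma block_shiftMap_iterate (i n k : ℕ) (x : ℕ → A) :
    block i n (shiftMap^[k] x) = block (i + k) n x := by
  induction k generalizing x with
  | zero => rfl
  | succ k ih =>
    rw [Function.iterate_succ_apply, ih]
    exact funext fun j => congrArg x (by omega)

lemma cyl_ofFn {n : ℕ} (w : Fin n → A) : cyl (List.ofFn w) = block 0 n ⁻¹' {w} := by
  ext x
  simp only [cyl, Set.mem_ofPred_eq, Set.mem_preimage, Set.mem_singleton_iff]
  refine ⟨fun h => funext fun k => ?_, ?_⟩
  · simpa [block] using h (Fin.cast (by simp) k)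
  · rintro rfl k
    simp [block]

lemma wordOf_eq_ofFn_block (x : ℕ → A) (n : ℕ) : wordOf x n = List.ofFn (block 0 n x) :=
  congrArg List.ofFn (funext fun i => congrArg x (Nat.zero_add i).symm)

lemma sum_append [Fintype A] (n m : ℕ) (g : (Fin (n + m) → A) → ℝ) :
    ∑ w, g w = ∑ u : Fin n → A, ∑ v : Fin m → A, g (Fin.append u v) := by
  rw [← Fintype.sum_prod_type']
  exact (Equiv.sum_comp (Fin.appendEquiv n m) g).symm

lemma continuous_block [TopologicalSpace A] (i n : ℕ) : Continuous (block (A := A) i n) := by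
  unfold block; fun_prop

variable [MeasurableSpace A]

lemma measurable_block (i n : ℕ) : Measurable (block (A := A) i n) := by
  unfold block; fun_prop

lemma measurable_shiftMap : Measurable (shiftMap (A := A)) := by
  unfold shiftMap; fun_prop

end Block

section BlockProb

variable {A : Type} [MeasurableSpace A]

/-- The probability that the block starting at coordinate `i` is the word `w`. -/
noncomputable def blockProb (μ : Measure (ℕ → A)) (i : ℕ) {n : ℕ} (w : Fin n → A) : ℝ :=
  μ.real (block i n ⁻¹' {w})

lemma blockProb_nonneg (μ : Measure (ℕ → A)) (i : ℕ) {n : ℕ} (w : Fin n → A) :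
    0 ≤ blockProb μ i w :=
  measureReal_nonneg

lemma blockProb_le_one (μ : Measure (ℕ → A)) [IsProbabilityMeasure μ] (i : ℕ) {n : ℕ}
    (w : Fin n → A) : blockProb μ i w ≤ 1 :=
  measureReal_le_one

variable [MeasurableSingletonClass A]

lemma measurableSet_block (i : ℕ) {n : ℕ} (w : Fin n → A) :
    MeasurableSet (block i n ⁻¹' {w}) :=
  measurable_block i n (measurableSet_singleton w)

lemma blockProb_map_shiftMap_iterate (μ : Measure (ℕ → A)) (i k : ℕ) {n : ℕ} (w : Fin n → A) :
    blockProb (μ.map shiftMap^[k]) i w = blockProb μ (i + k) w := by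
  rw [blockProb, map_measureReal_apply (measurable_shiftMap.iterate k) (measurableSet_block i w),
    blockProb, ← Set.preimage_comp]
  simp only [Function.comp_def, block_shiftMap_iterate, Set.preimage]

lemma blockProb_eq_zero_index {μ : Measure (ℕ → A)} (h : μ.map shiftMap = μ) (i : ℕ) {n : ℕ}
    (w : Fin n → A) : blockProb μ i w = blockProb μ 0 w := by
  have map_iterate : μ.map shiftMap^[i] = μ :=
    ((⟨measurable_shiftMap, h⟩ : MeasurePreserving shiftMap μ μ).iterate i).map_eq
  conv_rhs => rw [← map_iterate, blockProb_map_shiftMap_iterate, zero_add]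

lemma ext_of_blockProb [Finite A] {μ ν : Measure (ℕ → A)} [IsFiniteMeasure μ] [IsFiniteMeasure ν]
    (h : ∀ n (w : Fin n → A), blockProb μ 0 w = blockProb ν 0 w) : μ = ν := by
  have map_block : ∀ n, μ.map (block 0 n) = ν.map (block 0 n) := fun n =>
    Measure.ext_of_singleton fun w => by
      rw [Measure.map_apply (measurable_block 0 n) (measurableSet_singleton _),
        Measure.map_apply (measurable_block 0 n) (measurableSet_singleton _)]
      exact (measureReal_eq_measureReal_iff (measure_ne_top _ _) (measure_ne_top _ _)).1 (h n w)
  refine IsProjectiveLimit.unique (P := fun I : Finset ℕ => ν.map I.restrict) (fun I => ?_)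
    fun I => rfl
  have lt_bound : ∀ i ∈ I, i < I.sup id + 1 := fun i hi =>
    Nat.lt_succ_of_le (Finset.le_sup (f := id) hi)
  let restrict : (Fin (I.sup id + 1) → A) → I → A := fun w i => w ⟨i, lt_bound i i.2⟩
  have factor : I.restrict = restrict ∘ block (A := A) 0 (I.sup id + 1) := by
    ext x i
    simp [restrict, block]
  have measurable_restrict : Measurable restrict := by fun_prop
  simp only [factor, ← Measure.map_map measurable_restrict (measurable_block 0 _), map_block]

variable [Fintype A]

lemma measureReal_eq_sum_inter_block (μ : Measure (ℕ → A)) [IsFiniteMeasure μ] (s : Set (ℕ → A))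
    (i n : ℕ) : μ.real s = ∑ w : Fin n → A, μ.real (s ∩ block i n ⁻¹' {w}) := by
  have h := sum_measureReal_preimage_singleton (μ := μ.restrict s)
    (Finset.univ : Finset (Fin n → A)) (f := block i n) fun w _ => measurableSet_block i w
  simp only [Finset.coe_univ, Set.preimage_univ, measureReal_restrict_apply MeasurableSet.univ,
    Set.univ_inter, measureReal_restrict_apply (measurableSet_block _ _)] at h
  simp only [← h, Set.inter_comm]

lemma sum_blockProb (μ : Measure (ℕ → A)) [IsProbabilityMeasure μ] (i n : ℕ) :
    ∑ w : Fin n → A, blockProb μ i w = 1 := by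
  simpa only [blockProb, Set.univ_inter, probReal_univ] using
    (measureReal_eq_sum_inter_block μ Set.univ i n).symm

lemma sum_blockProb_append_right (μ : Measure (ℕ → A)) [IsFiniteMeasure μ] (i : ℕ) {n : ℕ}
    (m : ℕ) (u : Fin n → A) :
    ∑ v : Fin m → A, blockProb μ i (Fin.append u v) = blockProb μ i u := by
  simp only [blockProb, measureReal_eq_sum_inter_block μ (block i n ⁻¹' {u}) (i + n) m,
    block_preimage_append]

lemma sum_blockProb_append_left (μ : Measure (ℕ → A)) [IsFiniteMeasure μ] (i n : ℕ) {m : ℕ}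
    (v : Fin m → A) :
    ∑ u : Fin n → A, blockProb μ i (Fin.append u v) = blockProb μ (i + n) v := by
  simp only [blockProb, measureReal_eq_sum_inter_block μ (block (i + n) m ⁻¹' {v}) i n,
    block_preimage_append, Set.inter_comm]

end BlockProb

lemma blockProb_eq_of_forall_initial {A : Type} [Finite A] [MeasurableSpace A]
    [MeasurableSingletonClass A] {μ ν : Measure (ℕ → A)} [IsFiniteMeasure μ] [IsFiniteMeasure ν]
    {n : ℕ} (h : ∀ w : Fin n → A, blockProb μ 0 w = blockProb ν 0 w)
    {k l : ℕ} (hkl : k + l ≤ n) (w : Fin l → A) : blockProb μ k w = blockProb ν k w := by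
  cases nonempty_fintype A
  obtain ⟨r, rfl⟩ := Nat.exists_eq_add_of_le hkl
  have initial : ∀ u : Fin (k + l) → A, blockProb μ 0 u = blockProb ν 0 u := fun u => by
    rw [← sum_blockProb_append_right μ 0 r, ← sum_blockProb_append_right ν 0 r]
    exact Finset.sum_congr rfl fun v _ => h _
  have hμ := sum_blockProb_append_left μ 0 k w
  have hν := sum_blockProb_append_left ν 0 k w
  rw [zero_add] at hμ hν
  rw [← hμ, ← hν]
  exact Finset.sum_congr rfl fun u _ => initial _

lemma isClopen_block {A : Type} [TopologicalSpace A] [DiscreteTopology A] (i : ℕ) {n : ℕ}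
    (w : Fin n → A) : IsClopen (block i n ⁻¹' {w}) :=
  (isClopen_discrete {w}).preimage (continuous_block i n)

lemma continuous_blockProb {A : Type} [Finite A] [TopologicalSpace A] [DiscreteTopology A]
    [MeasurableSpace A] [BorelSpace A] (i : ℕ) {n : ℕ} (w : Fin n → A) :
    Continuous fun μ : ProbabilityMeasure (ℕ → A) => blockProb (μ : Measure (ℕ → A)) i w := by
  refine continuous_iff_continuousAt.2 fun μ =>
    (ENNReal.tendsto_toReal (measure_ne_top _ _)).comp
      (ProbabilityMeasure.tendsto_measure_of_null_frontier_of_tendsto' (μs := id) tendsto_id ?_)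
  rw [(isClopen_block i w).frontier_eq, measure_empty]

section EntropyEnergy

variable {A : Type}

/-- Word functions `f` that are submultiplicative on all words, up to the factor `exp C`. -/
structure SubmultWeight (f : List A → ℝ) (C : ℝ) : Prop where
  nonneg : ∀ I, 0 ≤ f I
  nil : f [] = 1
  const_nonneg : 0 ≤ C
  append_le : ∀ I J, f (I ++ J) ≤ Real.exp C * f I * f J

namespace SubmultWeight

variable {f : List A → ℝ} {C : ℝ}

lemma append_eq_zero (hf : SubmultWeight f C) {I J : List A} (h : f I = 0 ∨ f J = 0) :
    f (I ++ J) = 0 := by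
  refine (hf.nonneg _).antisymm' ((hf.append_le I J).trans_eq ?_)
  rcases h with h | h <;> simp [h]

lemma log_append_le (hf : SubmultWeight f C) {I J : List A} (h : f (I ++ J) ≠ 0) :
    Real.log (f (I ++ J)) ≤ Real.log (f I) + Real.log (f J) + C := by
  obtain ⟨hI, hJ⟩ := not_or.1 (mt hf.append_eq_zero h)
  calc Real.log (f (I ++ J)) ≤ Real.log (Real.exp C * f I * f J) :=
        Real.log_le_log ((hf.nonneg _).lt_of_ne' h) (hf.append_le I J)
    _ = Real.log (f I) + Real.log (f J) + C := by
        rw [Real.log_mul (mul_ne_zero (Real.exp_ne_zero C) hI) hJ,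
          Real.log_mul (Real.exp_ne_zero C) hI, Real.log_exp]
        ring

end SubmultWeight

variable [MeasurableSpace A] {f : List A → ℝ} {C : ℝ} {μ : Measure (ℕ → A)}

/-- The words of length `n` of zero weight have probability zero at coordinate `i`, so that the
corresponding block energy is a genuine finite quantity. -/
def FiniteEnergyAt (f : List A → ℝ) (μ : Measure (ℕ → A)) (i n : ℕ) : Prop :=
  ∀ w : Fin n → A, f (List.ofFn w) = 0 → blockProb μ i w = 0

/-- Every word of zero weight is null for `μ`; otherwise `Φ_*(μ) = -∞`. -/
def FiniteEnergy (f : List A → ℝ) (μ : Measure (ℕ → A)) : Prop :=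
  ∀ n, FiniteEnergyAt f μ 0 n

lemma FiniteEnergyAt.sub_block [Finite A] [MeasurableSingletonClass A] [IsFiniteMeasure μ]
    (hf : SubmultWeight f C) {n : ℕ} (h : FiniteEnergyAt f μ 0 n) {k l : ℕ}
    (hkl : k + l ≤ n) : FiniteEnergyAt f μ k l := by
  cases nonempty_fintype A
  obtain ⟨r, rfl⟩ := Nat.exists_eq_add_of_le hkl
  intro w hw
  have hk := sum_blockProb_append_left μ 0 k w
  rw [zero_add] at hk
  rw [← hk]
  refine Finset.sum_eq_zero fun u _ => ?_
  rw [← sum_blockProb_append_right μ 0 r]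
  refine Finset.sum_eq_zero fun v _ => h _ ?_
  rw [List.ofFn_fin_append, List.ofFn_fin_append]
  exact hf.append_eq_zero (.inl (hf.append_eq_zero (.inr hw)))

variable [Fintype A]

/-- The Shannon entropy of the block of length `n` at coordinate `i`. -/
noncomputable def blockEntropy (μ : Measure (ℕ → A)) (i n : ℕ) : ℝ :=
  ∑ w : Fin n → A, Real.negMulLog (blockProb μ i w)

/-- The mean energy `∫ log f` of the block of length `n` at coordinate `i`. It is meaningful under
`FiniteEnergyAt f μ i n`, as `Real.log 0 = 0`. -/
noncomputable def blockEnergy (f : List A → ℝ) (μ : Measure (ℕ → A)) (i n : ℕ) : ℝ :=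
  ∑ w : Fin n → A, blockProb μ i w * Real.log (f (List.ofFn w))

section Bounds

variable (μ : Measure (ℕ → A)) [IsProbabilityMeasure μ] (i n : ℕ)

lemma blockEntropy_nonneg : 0 ≤ blockEntropy μ i n :=
  Finset.sum_nonneg fun _ _ =>
    Real.negMulLog_nonneg (blockProb_nonneg _ _ _) (blockProb_le_one _ _ _)

lemma abs_blockEnergy_le (f : List A → ℝ) :
    |blockEnergy f μ i n| ≤ ∑ w : Fin n → A, |Real.log (f (List.ofFn w))| := by
  refine (Finset.abs_sum_le_sum_abs _ _).trans (Finset.sum_le_sum fun w _ => ?_)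
  rw [abs_mul, abs_of_nonneg (blockProb_nonneg _ _ _)]
  exact mul_le_of_le_one_left (abs_nonneg _) (blockProb_le_one _ _ _)

variable [MeasurableSingletonClass A]

lemma blockEntropy_le : blockEntropy μ i n ≤ Real.log (Fintype.card (Fin n → A)) := by
  simpa [blockEntropy, sum_blockProb] using
    sum_negMulLog_add_mul_log_le (Finset.univ : Finset (Fin n → A)) (p := blockProb μ i)
      (f := fun _ => 1) (fun _ _ => blockProb_nonneg _ _ _) (by simp) (by simp)

end Bounds

variable [MeasurableSingletonClass A]

lemma blockEntropy_add_le (μ : Measure (ℕ → A)) [IsProbabilityMeasure μ] (i n m : ℕ) :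
    blockEntropy μ i (n + m) ≤ blockEntropy μ i n + blockEntropy μ (i + n) m := by
  have := sum_negMulLog_le_add_marginals
    (P := fun (u : Fin n → A) (v : Fin m → A) => blockProb μ i (Fin.append u v))
    (fun _ _ => blockProb_nonneg _ _ _) (by rw [← sum_append, sum_blockProb])
  simpa only [blockEntropy, sum_append, sum_blockProb_append_right, sum_blockProb_append_left]
    using this

lemma blockEnergy_add_le (hf : SubmultWeight f C) [IsProbabilityMeasure μ] {i n m : ℕ}
    (h : FiniteEnergyAt f μ i (n + m)) :
    blockEnergy f μ i (n + m) ≤ blockEnergy f μ i n + blockEnergy f μ (i + n) m + C := by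
  have pointwise : ∀ (u : Fin n → A) (v : Fin m → A),
      blockProb μ i (Fin.append u v) * Real.log (f (List.ofFn (Fin.append u v))) ≤
      blockProb μ i (Fin.append u v) * Real.log (f (List.ofFn u)) +
      blockProb μ i (Fin.append u v) * Real.log (f (List.ofFn v)) +
      blockProb μ i (Fin.append u v) * C := fun u v => by
    by_cases h0 : f (List.ofFn (Fin.append u v)) = 0
    · simp [h _ h0]
    · rw [List.ofFn_fin_append] at h0 ⊢
      rw [← mul_add, ← mul_add]
      exact mul_le_mul_of_nonneg_left (hf.log_append_le h0) (blockProb_nonneg _ _ _)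
  calc blockEnergy f μ i (n + m) ≤ ∑ u : Fin n → A, ∑ v : Fin m → A,
        (blockProb μ i (Fin.append u v) * Real.log (f (List.ofFn u)) +
          blockProb μ i (Fin.append u v) * Real.log (f (List.ofFn v)) +
          blockProb μ i (Fin.append u v) * C) := by
        rw [blockEnergy, sum_append]
        exact Finset.sum_le_sum fun u _ => Finset.sum_le_sum fun v _ => pointwise u v
    _ = blockEnergy f μ i n + blockEnergy f μ (i + n) m + C := by
        have right : ∑ u : Fin n → A, ∑ v : Fin m → A,
            blockProb μ i (Fin.append u v) * Real.log (f (List.ofFn v)) =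
            blockEnergy f μ (i + n) m := by
          rw [Finset.sum_comm]
          simp only [← Finset.sum_mul, sum_blockProb_append_left, blockEnergy]
        simp only [Finset.sum_add_distrib, right, ← Finset.sum_mul, sum_blockProb_append_right,
          sum_blockProb, one_mul, blockEnergy]

end EntropyEnergy

section Continuity

variable {A : Type} [Fintype A] [TopologicalSpace A] [DiscreteTopology A] [MeasurableSpace A]
  [BorelSpace A]

lemma continuous_blockEntropy (i n : ℕ) :
    Continuous fun μ : ProbabilityMeasure (ℕ → A) => blockEntropy (μ : Measure (ℕ → A)) i n :=
  continuous_finsetSum _ fun w _ => Real.continuous_negMulLog.comp (continuous_blockProb i w)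

lemma continuous_blockEnergy (f : List A → ℝ) (i n : ℕ) :
    Continuous fun μ : ProbabilityMeasure (ℕ → A) => blockEnergy f (μ : Measure (ℕ → A)) i n :=
  continuous_finsetSum _ fun w _ => (continuous_blockProb i w).mul_const _

end Continuity

lemma isClosed_setOf_finiteEnergy {A : Type} [Finite A] [TopologicalSpace A]
    [DiscreteTopology A] [MeasurableSpace A] [BorelSpace A] (f : List A → ℝ) :
    IsClosed {μ : ProbabilityMeasure (ℕ → A) | FiniteEnergy f (μ : Measure (ℕ → A))} := by
  simp only [FiniteEnergy, FiniteEnergyAt, Set.ofPred_forall]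
  exact isClosed_iInter fun n => isClosed_iInter fun w => isClosed_iInter fun _ =>
    isClosed_eq (continuous_blockProb 0 w) continuous_const

/-! ### Entropy and energy rates -/

section LogIntegral

variable {Ω : Type*} [MeasurableSpace Ω] {μ : Measure Ω} {g g' : Ω → ℝ}

lemma intlog_congr_ae (h : g =ᵐ[μ] g') : intlog μ g = intlog μ g' := by
  unfold intlog
  congr 2
  · exact lintegral_congr_ae (h.mono fun x hx => by simp only [hx])
  · exact lintegral_congr_ae (h.mono fun x hx => by simp only [hx])

lemma intlog_eq_integral (hpos : ∀ᵐ x ∂μ, 0 < g x)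
    (hint : Integrable (fun x => Real.log (g x)) μ) :
    intlog μ g = ((∫ x, Real.log (g x) ∂μ : ℝ) : EReal) := by
  have negative_part : ∫⁻ x, (if g x ≤ 0 then (⊤ : ℝ≥0∞) else ENNReal.ofReal (-Real.log (g x))) ∂μ
      = ∫⁻ x, ENNReal.ofReal (-Real.log (g x)) ∂μ :=
    lintegral_congr_ae (hpos.mono fun x hx => if_neg hx.not_ge)
  have negative_finite : ∫⁻ x, ENNReal.ofReal (-Real.log (g x)) ∂μ ≠ ⊤ :=
    hint.neg.lintegral_lt_top.ne
  rw [intlog, negative_part, integral_eq_lintegral_pos_part_sub_lintegral_neg_part hint,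
    EReal.coe_sub, EReal.coe_ennreal_toReal hint.lintegral_lt_top.ne,
    EReal.coe_ennreal_toReal negative_finite]

lemma intlog_eq_bot (hg : Measurable g) (hpos : ¬ ∀ᵐ x ∂μ, 0 < g x) : intlog μ g = ⊥ := by
  have negative_part :
      ∫⁻ x, (if g x ≤ 0 then (⊤ : ℝ≥0∞) else ENNReal.ofReal (-Real.log (g x))) ∂μ = ⊤ := by
    have nonpos : MeasurableSet {x | g x ≤ 0} := measurableSet_le hg measurable_const
    refine lintegral_eq_top_of_measure_eq_top_ne_zero
      (Measurable.ite nonpos measurable_const (hg.log.neg.ennreal_ofReal)).aemeasurable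
      fun h0 => hpos ?_
    filter_upwards [measure_eq_zero_iff_ae_notMem.1 h0] with x hx
    by_contra hx'
    exact hx (if_pos (not_lt.1 hx'))
  rw [intlog, negative_part, EReal.coe_ennreal_top, EReal.sub_top]

end LogIntegral

lemma PhiStar_congr {A : Type} [MeasurableSpace A] {μ : Measure (ℕ → A)}
    {φ ψ : ℕ → (ℕ → A) → ℝ} (h : ∀ n, φ n =ᵐ[μ] ψ n) : PhiStar μ φ = PhiStar μ ψ := by
  simp only [PhiStar, fun n => intlog_congr_ae (h n)]

lemma InvOn.ae_mem {A : Type} [MeasurableSpace A] {X : Set (ℕ → A)} (hX : MeasurableSet X)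
    {μ : Measure (ℕ → A)} (hμ : InvOn X μ) : ∀ᵐ x ∂μ, x ∈ X := by
  obtain ⟨_, -, hX1⟩ := hμ
  exact (mem_ae_iff_prob_eq_one hX).2 hX1

lemma SubmultWeight.rpow {A : Type} {f : List A → ℝ} {C : ℝ}
    (hf : SubmultWeight f C) {s : ℝ} (hs : 0 ≤ s) :
    SubmultWeight (fun I => f I ^ s) (s * C) where
  nonneg I := Real.rpow_nonneg (hf.nonneg I) s
  nil := by simp [hf.nil]
  const_nonneg := mul_nonneg hs hf.const_nonneg
  append_le I J := by
    have := Real.rpow_le_rpow (hf.nonneg _) (hf.append_le I J) hs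
    rwa [Real.mul_rpow (mul_nonneg (Real.exp_pos _).le (hf.nonneg _)) (hf.nonneg _),
      Real.mul_rpow (Real.exp_pos _).le (hf.nonneg _), ← Real.exp_mul, mul_comm C s] at this

lemma log_rpow_of_nonneg {x : ℝ} (hx : 0 ≤ x) {s : ℝ} (hs : s ≠ 0) :
    Real.log (x ^ s) = s * Real.log x := by
  rcases hx.eq_or_lt with rfl | hx
  · simp [Real.zero_rpow hs]
  · exact Real.log_rpow hx s

section Rates

variable {A : Type} [MeasurableSpace A] [MeasurableSingletonClass A] {μ : Measure (ℕ → A)}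
  {f : List A → ℝ} {C : ℝ}

lemma finiteEnergyAt_iff_ae [Finite A] [IsFiniteMeasure μ] (hf : ∀ I, 0 ≤ f I) (i n : ℕ) :
    FiniteEnergyAt f μ i n ↔ ∀ᵐ x ∂μ, 0 < f (List.ofFn (block i n x)) := by
  rw [← ae_map_iff (measurable_block i n).aemeasurable
    (p := fun w => 0 < f (List.ofFn w)) (Set.toFinite _).measurableSet, ae_iff_of_countable]
  refine forall_congr' fun w => ?_
  rw [Measure.map_apply (measurable_block i n) (measurableSet_singleton w),
    (hf (List.ofFn w)).lt_iff_ne', blockProb, measureReal_eq_zero_iff, ← not_imp_comm, not_not]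

lemma integral_log_block [Fintype A] [IsFiniteMeasure μ] (f : List A → ℝ) (i n : ℕ) :
    ∫ x, Real.log (f (List.ofFn (block i n x))) ∂μ = blockEnergy f μ i n := by
  rw [← integral_map (measurable_block i n).aemeasurable
    (f := fun w => Real.log (f (List.ofFn w)))
    (measurable_of_finite _).aestronglyMeasurable, integral_fintype .of_finite]
  refine Finset.sum_congr rfl fun w _ => ?_
  rw [map_measureReal_apply (measurable_block i n) (measurableSet_singleton w), smul_eq_mul,
    blockProb]

lemma measurable_genPot [Finite A] (f : List A → ℝ) (n : ℕ) : Measurable (genPot f n) := by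
  unfold genPot
  simp only [wordOf_eq_ofFn_block]
  exact (measurable_of_finite fun w : Fin n → A => f (List.ofFn w)).comp (measurable_block 0 n)

lemma intlog_genPot [Fintype A] [IsFiniteMeasure μ] (hf : ∀ I, 0 ≤ f I) {n : ℕ}
    (h : FiniteEnergyAt f μ 0 n) :
    intlog μ (genPot f n) = (blockEnergy f μ 0 n : EReal) := by
  rw [finiteEnergyAt_iff_ae hf] at h
  have integrable : Integrable (fun x => Real.log (f (List.ofFn (block 0 n x)))) μ :=
    (Integrable.of_finite (f := fun w : Fin n → A => Real.log (f (List.ofFn w)))).comp_measurable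
      (measurable_block 0 n)
  rw [← integral_log_block]
  simp only [← wordOf_eq_ofFn_block] at h integrable ⊢
  exact intlog_eq_integral h integrable

lemma intlog_genPot_eq_bot [Finite A] [IsFiniteMeasure μ] (hf : ∀ I, 0 ≤ f I) {n : ℕ}
    (h : ¬ FiniteEnergyAt f μ 0 n) : intlog μ (genPot f n) = ⊥ := by
  rw [finiteEnergyAt_iff_ae hf] at h
  simp only [← wordOf_eq_ofFn_block] at h
  exact intlog_eq_bot (measurable_genPot f n) h

lemma PhiStar_eq_bot [Finite A] [IsFiniteMeasure μ] (hf : SubmultWeight f C)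
    (h : ¬ FiniteEnergy f μ) :
    PhiStar μ (genPot f) = ⊥ := by
  obtain ⟨N, hN⟩ := not_forall.1 h
  refine Tendsto.liminf_eq (tendsto_const_nhds.congr' ?_)
  filter_upwards [eventually_ge_atTop N, eventually_gt_atTop 0] with n hn hn0
  rw [intlog_genPot_eq_bot hf.nonneg fun h' => hN (h'.sub_block hf (by omega)),
    EReal.coe_mul_bot_of_pos (by positivity)]

section Invariant

variable [Fintype A] (h : μ.map shiftMap = μ)
include h

lemma blockEntropy_eq_zero_index (i n : ℕ) : blockEntropy μ i n = blockEntropy μ 0 n := by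
  simp only [blockEntropy, blockProb_eq_zero_index h i]

lemma blockEnergy_eq_zero_index (f : List A → ℝ) (i n : ℕ) :
    blockEnergy f μ i n = blockEnergy f μ 0 n := by
  simp only [blockEnergy, blockProb_eq_zero_index h i]

variable [IsProbabilityMeasure μ]

lemma blockEntropy_subadditive (n m : ℕ) :
    blockEntropy μ 0 (n + m) ≤ blockEntropy μ 0 n + blockEntropy μ 0 m :=
  blockEntropy_eq_zero_index h (0 + n) m ▸ blockEntropy_add_le μ 0 n m

lemma blockEnergy_subadditive (hf : SubmultWeight f C) (hE : FiniteEnergy f μ) (n m : ℕ) :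
    blockEnergy f μ 0 (n + m) ≤ blockEnergy f μ 0 n + blockEnergy f μ 0 m + C :=
  blockEnergy_eq_zero_index h f (0 + n) m ▸ blockEnergy_add_le hf (hE (n + m))

lemma PhiStar_eq_growthRate (hf : SubmultWeight f C) (hE : FiniteEnergy f μ) :
    PhiStar μ (genPot f) = growthRate (blockEnergy f μ 0) C := by
  refine Tendsto.liminf_eq
    ((tendsto_growthRate (blockEnergy_subadditive h hf hE)).congr fun n => ?_)
  rw [intlog_genPot hf.nonneg (hE n), ← EReal.coe_mul, div_eq_inv_mul]

end Invariant

lemma PhiStar_ne_top [Finite A] [IsProbabilityMeasure μ] (h : μ.map shiftMap = μ)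
    (hf : SubmultWeight f C) : PhiStar μ (genPot f) ≠ ⊤ := by
  cases nonempty_fintype A
  by_cases hE : FiniteEnergy f μ
  · exact PhiStar_eq_growthRate h hf hE ▸ growthRate_ne_top _ _
  · simp [PhiStar_eq_bot hf hE]

lemma PhiStar_rpow [Finite A] [IsProbabilityMeasure μ] (h : μ.map shiftMap = μ)
    (hf : SubmultWeight f C) {s : ℝ} (hs : 0 < s) :
    PhiStar μ (genPot fun I => f I ^ s) = (s : EReal) * PhiStar μ (genPot f) := by
  cases nonempty_fintype A
  have finiteEnergy_rpow : FiniteEnergy (fun I => f I ^ s) μ ↔ FiniteEnergy f μ := by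
    simp only [FiniteEnergy, FiniteEnergyAt, Real.rpow_eq_zero (hf.nonneg _) hs.ne']
  by_cases hE : FiniteEnergy f μ
  · have energy_rpow : ∀ n, blockEnergy (fun I => f I ^ s) μ 0 n = s * blockEnergy f μ 0 n :=
      fun n => by
        simp only [blockEnergy, Finset.mul_sum, log_rpow_of_nonneg (hf.nonneg _) hs.ne',
          mul_left_comm s]
    have rate := tendsto_growthRate (blockEnergy_subadditive h hf hE)
    have rate_rpow := tendsto_growthRate
      (blockEnergy_subadditive h (hf.rpow hs.le) (finiteEnergy_rpow.2 hE))
    rw [PhiStar_eq_growthRate h hf hE,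
      PhiStar_eq_growthRate h (hf.rpow hs.le) (finiteEnergy_rpow.2 hE)]
    refine tendsto_nhds_unique rate_rpow
      ((EReal.Tendsto.const_mul rate (.inl (by simp)) (.inl (by simp))).congr fun n => ?_)
    rw [← EReal.coe_mul, energy_rpow, mul_div_assoc]
  · rw [PhiStar_eq_bot hf hE, PhiStar_eq_bot (hf.rpow hs.le) (mt finiteEnergy_rpow.1 hE),
      EReal.coe_mul_bot_of_pos hs]

section Entropy

variable [Fintype A] {X : Set (ℕ → A)} (hX : MeasurableSet X) (hμ : InvOn X μ)
include hX hμ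

omit [MeasurableSingletonClass A] in
lemma Hblock_eq_blockEntropy (n : ℕ) : Hblock X μ n = blockEntropy μ 0 n := by
  have inter_conull : ∀ s : Set (ℕ → A), μ (s ∩ X) = μ s := fun s =>
    measure_inter_conull (ae_iff.1 (hμ.ae_mem hX))
  simp only [Hblock, mw, inter_conull, cyl_ofFn, ← Finset.sum_neg_distrib, blockEntropy,
    Real.negMulLog, blockProb, Measure.real, neg_mul]

lemma tendsto_blockEntropy_div :
    Tendsto (fun n : ℕ => blockEntropy μ 0 n / n) atTop (𝓝 (ent X μ)) := by
  obtain ⟨_, hinv, -⟩ := id hμ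
  have rate := tendsto_growthRate (w := blockEntropy μ 0) (C := 0)
    fun n m => (blockEntropy_subadditive hinv n m).trans_eq (add_zero _).symm
  have rate_nonneg : ((0 : ℝ) : EReal) ≤ growthRate (blockEntropy μ 0) 0 :=
    coe_le_growthRate_iff.2 fun n _ => by simpa using blockEntropy_nonneg μ 0 n
  lift growthRate (blockEntropy μ 0) 0 to ℝ using
    ⟨growthRate_ne_top _ _, (EReal.bot_lt_coe 0 |>.trans_le rate_nonneg).ne'⟩ with e
  have limit := EReal.tendsto_coe.1 rate
  rwa [ent, funext fun n : ℕ => congrArg (· / (n : ℝ)) (Hblock_eq_blockEntropy hX hμ n),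
    limit.liminf_eq]

lemma ent_eq_growthRate : (ent X μ : EReal) = growthRate (blockEntropy μ 0) 0 := by
  obtain ⟨_, hinv, -⟩ := id hμ
  exact tendsto_nhds_unique (EReal.tendsto_coe.2 (tendsto_blockEntropy_div hX hμ))
    (tendsto_growthRate fun n m => (blockEntropy_subadditive hinv n m).trans_eq (add_zero _).symm)

lemma PhiStar_add_ent_eq_growthRate (hf : SubmultWeight f C) (hE : FiniteEnergy f μ) :
    PhiStar μ (genPot f) + ent X μ =
      growthRate (fun n => blockEnergy f μ 0 n + blockEntropy μ 0 n) C := by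
  obtain ⟨_, hinv, -⟩ := id hμ
  have energy_rate := tendsto_growthRate (blockEnergy_subadditive hinv hf hE)
  rw [← PhiStar_eq_growthRate hinv hf hE] at energy_rate
  have sum_rate : Tendsto (fun n : ℕ =>
      (((blockEnergy f μ 0 n + blockEntropy μ 0 n) / n : ℝ) : EReal)) atTop
      (𝓝 (PhiStar μ (genPot f) + ent X μ)) := by
    simp only [add_div, EReal.coe_add]
    exact (EReal.continuousAt_add (.inl (PhiStar_ne_top hinv hf)) (.inr (by simp))).tendsto.comp
      (energy_rate.prodMk_nhds (EReal.tendsto_coe.2 (tendsto_blockEntropy_div hX hμ)))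
  refine tendsto_nhds_unique sum_rate (tendsto_growthRate fun n m => ?_)
  linarith [blockEnergy_subadditive hinv hf hE n m, blockEntropy_subadditive hinv n m]

end Entropy

end Rates

/-! ### One-block maps and summation over fibres -/

section FiberSum

variable {A B : Type}

/-- The weight `J ↦ ∑_{I : πI = J} f I`: the push-forward of a word function, summed over the fibres
of `π`. -/
noncomputable def fiberSum [Fintype A] (π : A → B) (f : List A → ℝ) (J : List B) : ℝ :=
  ∑ w : Fin J.length → A with List.map π (List.ofFn w) = J, f (List.ofFn w)

lemma comp_append_eq_append_iff (π : A → B) {n m : ℕ} (u : Fin n → A) (u' : Fin m → A)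
    (v : Fin n → B) (v' : Fin m → B) :
    π ∘ Fin.append u u' = Fin.append v v' ↔ π ∘ u = v ∧ π ∘ u' = v' := by
  constructor
  · exact fun h => ⟨funext fun k => by simpa using congrFun h (Fin.castAdd m k),
      funext fun k => by simpa using congrFun h (Fin.natAdd n k)⟩
  · rintro ⟨rfl, rfl⟩
    exact funext <| Fin.addCases (by simp) (by simp)

variable [Fintype A]

lemma fiberSum_ofFn (π : A → B) (f : List A → ℝ) {n : ℕ} (v : Fin n → B) :
    fiberSum π f (List.ofFn v) = ∑ w : Fin n → A with π ∘ w = v, f (List.ofFn w) := by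
  have sum_of_length : ∀ (J : List B) (n : ℕ), J.length = n → fiberSum π f J =
      ∑ w : Fin n → A with List.map π (List.ofFn w) = J, f (List.ofFn w) := by
    rintro J n rfl
    rfl
  rw [sum_of_length _ n List.length_ofFn]
  simp only [List.map_ofFn, List.ofFn_inj]

lemma sum_fiber_append (π : A → B) {n m : ℕ} (v : Fin n → B) (v' : Fin m → B)
    (g : (Fin (n + m) → A) → ℝ) :
    ∑ w : Fin (n + m) → A with π ∘ w = Fin.append v v', g w =
      ∑ u : Fin n → A with π ∘ u = v, ∑ u' : Fin m → A with π ∘ u' = v', g (Fin.append u u') := by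
  simp only [Finset.sum_filter, sum_append, comp_append_eq_append_iff, ite_and,
    Finset.sum_ite_irrel, Finset.sum_const_zero]

lemma fiberSum_submultWeight (π : A → B) {f : List A → ℝ} {C : ℝ} (hf : SubmultWeight f C) :
    SubmultWeight (fiberSum π f) C where
  nonneg J := Finset.sum_nonneg fun _ _ => hf.nonneg _
  nil := by simp [fiberSum, Finset.filter_true_of_mem, hf.nil]
  const_nonneg := hf.const_nonneg
  append_le I J := by
    obtain ⟨n, v, rfl⟩ : ∃ n, ∃ v : Fin n → B, I = List.ofFn v := ⟨_, I.get, by simp⟩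
    obtain ⟨m, v', rfl⟩ : ∃ m, ∃ v' : Fin m → B, J = List.ofFn v' := ⟨_, J.get, by simp⟩
    rw [← List.ofFn_fin_append, fiberSum_ofFn, fiberSum_ofFn, fiberSum_ofFn, sum_fiber_append,
      mul_assoc, Finset.sum_mul_sum, Finset.mul_sum]
    refine Finset.sum_le_sum fun u _ => ?_
    rw [Finset.mul_sum]
    refine Finset.sum_le_sum fun u' _ => ?_
    rw [List.ofFn_fin_append, ← mul_assoc]
    exact hf.append_le _ _

end FiberSum

lemma continuous_blockMap {A B : Type} [TopologicalSpace A] [DiscreteTopology A]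
    [TopologicalSpace B] (π : A → B) : Continuous (blockMap π) := by
  have : Continuous π := continuous_of_discreteTopology
  unfold blockMap
  fun_prop

section Pushforward

variable {A B : Type} [MeasurableSpace A] [MeasurableSpace B]

lemma measurable_blockMap [Countable A] [MeasurableSingletonClass A] (π : A → B) :
    Measurable (blockMap π) := by
  have : Measurable π := measurable_of_countable π
  unfold blockMap
  fun_prop

variable [MeasurableSingletonClass A]

lemma InvOn.map_blockMap [Countable A] {X : Set (ℕ → A)} {Y : Set (ℕ → B)} {π : A → B}
    (hπ : Set.MapsTo (blockMap π) X Y) (hY : MeasurableSet Y) {μ : Measure (ℕ → A)}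
    (hμ : InvOn X μ) : InvOn Y (μ.map (blockMap π)) := by
  obtain ⟨_, hinv, hX⟩ := hμ
  have isProbability : IsProbabilityMeasure (μ.map (blockMap π)) :=
    Measure.isProbabilityMeasure_map (measurable_blockMap π).aemeasurable
  refine ⟨isProbability, ?_, le_antisymm prob_le_one ?_⟩
  · conv_rhs => rw [← hinv]
    rw [Measure.map_map measurable_shiftMap (measurable_blockMap π),
      Measure.map_map (measurable_blockMap π) measurable_shiftMap]
    rfl
  · rw [Measure.map_apply (measurable_blockMap π) hY, ← hX]
    exact measure_mono hπ

variable [MeasurableSingletonClass B]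

lemma blockProb_map_blockMap [Fintype A] (π : A → B) (μ : Measure (ℕ → A)) [IsFiniteMeasure μ]
    (i : ℕ) {n : ℕ} (v : Fin n → B) :
    blockProb (μ.map (blockMap π)) i v = ∑ w : Fin n → A with π ∘ w = v, blockProb μ i w := by
  simp only [blockProb]
  rw [map_measureReal_apply (measurable_blockMap π) (measurableSet_block i v),
    sum_measureReal_preimage_singleton _ fun w _ => measurableSet_block i w]
  congr 1
  ext x
  simp only [Finset.coe_filter, Finset.mem_univ, true_and]
  rfl

variable [Fintype A] {f : List A → ℝ} {C : ℝ} {μ : Measure (ℕ → A)} (π : A → B)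

lemma FiniteEnergy.map_blockMap [IsFiniteMeasure μ] (hf : ∀ I, 0 ≤ f I) (h : FiniteEnergy f μ) :
    FiniteEnergy (fiberSum π f) (μ.map (blockMap π)) := by
  intro n v hv
  rw [fiberSum_ofFn, Finset.sum_eq_zero_iff_of_nonneg fun _ _ => hf _] at hv
  rw [blockProb_map_blockMap]
  exact Finset.sum_eq_zero fun w hw => h n w (hv w hw)

lemma energy_add_entropy_le_map_blockMap [Fintype B] [IsFiniteMeasure μ] (hf : ∀ I, 0 ≤ f I)
    (h : FiniteEnergy f μ) (n : ℕ) :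
    blockEnergy f μ 0 n + blockEntropy μ 0 n ≤
      blockEnergy (fiberSum π f) (μ.map (blockMap π)) 0 n +
        blockEntropy (μ.map (blockMap π)) 0 n := by
  simp only [blockEnergy, blockEntropy, ← Finset.sum_add_distrib]
  rw [← Finset.sum_fiberwise _ fun w : Fin n → A => π ∘ w]
  refine Finset.sum_le_sum fun v _ => ?_
  rw [blockProb_map_blockMap, fiberSum_ofFn]
  simp only [add_comm _ (Real.negMulLog _)]
  exact sum_negMulLog_add_mul_log_le _ (fun _ _ => blockProb_nonneg _ _ _) (fun _ _ => hf _)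
    fun w _ => h n w

theorem PhiStar_add_ent_le_map_blockMap [Fintype B] {X : Set (ℕ → A)} {Y : Set (ℕ → B)}
    {π : A → B} (hπ : Set.MapsTo (blockMap π) X Y) (hX : MeasurableSet X) (hY : MeasurableSet Y)
    (hf : SubmultWeight f C) (hμ : InvOn X μ) :
    PhiStar μ (genPot f) + ent X μ ≤
      PhiStar (μ.map (blockMap π)) (genPot (fiberSum π f)) + ent Y (μ.map (blockMap π)) := by
  have := hμ.1
  by_cases hE : FiniteEnergy f μ
  · rw [PhiStar_add_ent_eq_growthRate hX hμ hf hE,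
      PhiStar_add_ent_eq_growthRate hY (hμ.map_blockMap hπ hY) (fiberSum_submultWeight π hf)
        (hE.map_blockMap π hf.nonneg)]
    refine iInf₂_mono fun n _ => EReal.coe_le_coe_iff.2 ?_
    gcongr
    exact energy_add_entropy_le_map_blockMap π hf.nonneg hE n
  · simp [PhiStar_eq_bot hf hE]

end Pushforward

/-! ### Lifting invariant measures through a one-block map -/

section Lift

variable {A : Type} [MeasurableSpace A] [MeasurableSingletonClass A]

lemma exists_measure_blockProb_eq [Fintype A] {X : Set (ℕ → A)} (hX : X.Nonempty)
    (hXm : MeasurableSet X) {n : ℕ} {g : (Fin n → A) → ℝ} (hg : ∀ w, 0 ≤ g w)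
    (hg1 : ∑ w, g w = 1) (hgX : ∀ w, g w ≠ 0 → Lang X (List.ofFn w)) :
    ∃ m : Measure (ℕ → A), IsProbabilityMeasure m ∧ m X = 1 ∧ ∀ w, blockProb m 0 w = g w := by
  have extend : ∀ w : Fin n → A, ∃ x ∈ X, g w ≠ 0 → block 0 n x = w := fun w => by
    by_cases h : g w = 0
    · exact ⟨hX.some, hX.some_mem, fun h' => absurd h h'⟩
    · obtain ⟨x, hx, hxX⟩ := hgX w h
      rw [cyl_ofFn] at hx
      exact ⟨x, hxX, fun _ => hx⟩
  choose x hxX hx using extend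
  set m : Measure (ℕ → A) := ∑ w, ENNReal.ofReal (g w) • Measure.dirac (x w) with hm
  have apply : ∀ s, MeasurableSet s → m s = ∑ w, ENNReal.ofReal (g w) * s.indicator 1 (x w) :=
    fun s hs => by
      simp only [hm, Measure.finsetSum_apply, Measure.smul_apply, smul_eq_mul,
        Measure.dirac_apply' _ hs]
  have full : ∀ s, MeasurableSet s → (∀ w, x w ∈ s) → m s = 1 := fun s hs hxs => by
    simp only [apply s hs, Set.indicator_of_mem (hxs _), Pi.one_apply, mul_one,
      ← ENNReal.ofReal_sum_of_nonneg fun w _ => hg w, hg1, ENNReal.ofReal_one]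
  refine ⟨m, ⟨full _ .univ fun _ => Set.mem_univ _⟩, full X hXm hxX, fun w => ?_⟩
  have term : ∀ u, ENNReal.ofReal (g u) * (block 0 n ⁻¹' {w}).indicator 1 (x u) =
      if u = w then ENNReal.ofReal (g w) else 0 := fun u => by
    by_cases h : g u = 0
    · rcases eq_or_ne u w with rfl | huw <;> simp [*]
    · simp only [Set.indicator_apply, Set.mem_preimage, hx u h, Set.mem_singleton_iff]
      split_ifs with huw <;> simp [huw]
  rw [blockProb, Measure.real, apply _ (measurableSet_block 0 w)]
  simp only [term, Finset.sum_ite_eq', Finset.mem_univ, if_true, ENNReal.toReal_ofReal (hg w)]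

variable {B : Type} [MeasurableSpace B] [MeasurableSingletonClass B]

/-- The lift has the conditional distribution proportional to `f` on each fibre: the equality case
of Gibbs' inequality. -/
lemma exists_lift_energy_add_entropy_eq [Fintype A] [Fintype B] (π : A → B) {X : Set (ℕ → A)}
    (hX : X.Nonempty) (hXm : MeasurableSet X) {f : List A → ℝ} (hf : ∀ I, 0 ≤ f I)
    (hfX : ∀ I, f I ≠ 0 → Lang X I) {ν : Measure (ℕ → B)} [IsProbabilityMeasure ν] {n : ℕ}
    (hν : FiniteEnergyAt (fiberSum π f) ν 0 n) :
    ∃ m : Measure (ℕ → A), IsProbabilityMeasure m ∧ m X = 1 ∧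
      (∀ v : Fin n → B, blockProb (m.map (blockMap π)) 0 v = blockProb ν 0 v) ∧
      FiniteEnergyAt f m 0 n ∧ blockEnergy f m 0 n + blockEntropy m 0 n =
        blockEnergy (fiberSum π f) ν 0 n + blockEntropy ν 0 n := by
  set g : (Fin n → A) → ℝ := fun w =>
    blockProb ν 0 (π ∘ w) * (f (List.ofFn w) / fiberSum π f (List.ofFn (π ∘ w))) with hg
  have sum_over_fiber : ∀ (F : ℝ → (Fin n → A) → ℝ) (v : Fin n → B),
      ∑ w : Fin n → A with π ∘ w = v, F (g w) w = ∑ w : Fin n → A with π ∘ w = v,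
        F (blockProb ν 0 v * (f (List.ofFn w) / ∑ u : Fin n → A with π ∘ u = v,
          f (List.ofFn u))) w := fun F v =>
    Finset.sum_congr rfl fun w hw => by
      simp only [hg, (Finset.mem_filter.1 hw).2, ← fiberSum_ofFn]
  have prob_eq_zero : ∀ v : Fin n → B, ∑ w : Fin n → A with π ∘ w = v, f (List.ofFn w) = 0 →
      blockProb ν 0 v = 0 := fun v h => hν v ((fiberSum_ofFn π f v).trans h)
  have marginal : ∀ v : Fin n → B, ∑ w : Fin n → A with π ∘ w = v, g w = blockProb ν 0 v :=
    fun v => by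
      rw [sum_over_fiber fun p _ => p, ← Finset.mul_sum, ← Finset.sum_div]
      rw [← mul_div_assoc, mul_div_cancel_of_imp (prob_eq_zero v)]
  have g_nonneg : ∀ w, 0 ≤ g w := fun w => mul_nonneg (blockProb_nonneg _ _ _)
    (div_nonneg (hf _) (Finset.sum_nonneg fun _ _ => hf _))
  have f_ne_zero : ∀ w, g w ≠ 0 → f (List.ofFn w) ≠ 0 := fun w h h0 => h (by simp [hg, h0])
  obtain ⟨m, hm, hmX, hmg⟩ := exists_measure_blockProb_eq hX hXm g_nonneg
    (by rw [← Finset.sum_fiberwise _ fun w : Fin n → A => π ∘ w]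
        simp only [marginal, sum_blockProb])
    fun w h => hfX _ (f_ne_zero w h)
  refine ⟨m, hm, hmX, fun v => ?_, fun w hw => ?_, ?_⟩
  · simp only [blockProb_map_blockMap, hmg, marginal]
  · rw [hmg]
    exact not_not.1 (mt (f_ne_zero w) (not_not.2 hw))
  · rw [add_comm, add_comm (blockEnergy _ ν _ _)]
    simp only [blockEnergy, blockEntropy, ← Finset.sum_add_distrib, hmg]
    rw [← Finset.sum_fiberwise _ fun w : Fin n → A => π ∘ w]
    refine Finset.sum_congr rfl fun v _ => ?_
    rw [sum_over_fiber fun p w => Real.negMulLog p + p * Real.log (f (List.ofFn w)),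
      sum_negMulLog_add_mul_log_of_proportional _ (prob_eq_zero v), fiberSum_ofFn]

end Lift

section ShiftAverage

variable {A : Type} [MeasurableSpace A]

/-- The average of the first `n` translates of `m` under the shift. -/
noncomputable def shiftAverage (m : Measure (ℕ → A)) (n : ℕ) : Measure (ℕ → A) :=
  (n : ℝ≥0∞)⁻¹ • ∑ k ∈ Finset.range n, m.map shiftMap^[k]

lemma shiftAverage_apply (m : Measure (ℕ → A)) (n : ℕ) {s : Set (ℕ → A)} (hs : MeasurableSet s) :
    shiftAverage m n s = (n : ℝ≥0∞)⁻¹ * ∑ k ∈ Finset.range n, m (shiftMap^[k] ⁻¹' s) := by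
  simp only [shiftAverage, Measure.smul_apply, Measure.finsetSum_apply, smul_eq_mul,
    Measure.map_apply (measurable_shiftMap.iterate _) hs]

lemma shiftAverage_eq_one {m : Measure (ℕ → A)} {n : ℕ} [NeZero n] {s : Set (ℕ → A)}
    (hs : MeasurableSet s) (h : ∀ k, m (shiftMap^[k] ⁻¹' s) = 1) : shiftAverage m n s = 1 := by
  simp only [shiftAverage_apply m n hs, h, Finset.sum_const, Finset.card_range, nsmul_eq_mul,
    mul_one]
  exact ENNReal.inv_mul_cancel (by simpa using NeZero.ne n) (ENNReal.natCast_ne_top n)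

instance (m : Measure (ℕ → A)) [IsProbabilityMeasure m] (n : ℕ) [NeZero n] :
    IsProbabilityMeasure (shiftAverage m n) :=
  ⟨shiftAverage_eq_one .univ fun _ => by simp⟩

lemma blockProb_shiftAverage [MeasurableSingletonClass A] (m : Measure (ℕ → A)) [IsFiniteMeasure m]
    (n i : ℕ) {l : ℕ} (w : Fin l → A) :
    blockProb (shiftAverage m n) i w =
      (∑ k ∈ Finset.range n, blockProb m (i + k) w) / n := by
  have preimage : ∀ k, shiftMap^[k] ⁻¹' (block i l ⁻¹' {w}) = block (i + k) l ⁻¹' {w} :=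
    fun k => by ext; simp only [Set.mem_preimage, block_shiftMap_iterate]
  simp only [blockProb, Measure.real]
  rw [shiftAverage_apply m n (measurableSet_block i w), ENNReal.toReal_mul,
    ENNReal.toReal_sum fun _ _ => measure_ne_top _ _, ENNReal.toReal_inv, ENNReal.toReal_natCast,
    div_eq_inv_mul]
  simp only [preimage]

lemma tendsto_average_of_eventually_const {a : ℕ → ℕ → ℝ} {K c : ℝ} {l : ℕ}
    (hK : ∀ n k, |a n k| ≤ K) (hc : ∀ n k, k + l ≤ n → a n k = c) :
    Tendsto (fun n : ℕ => (∑ k ∈ Finset.range n, a n k) / n) atTop (𝓝 c) := by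
  rw [tendsto_iff_norm_sub_tendsto_zero]
  refine squeeze_zero' (.of_forall fun _ => norm_nonneg _) ?_
    (tendsto_const_nhds (x := l * (K + |c|)).div_atTop tendsto_natCast_atTop_atTop)
  filter_upwards [eventually_gt_atTop 0] with n hn
  have card : ((Finset.range n).filter fun k => n < k + l).card ≤ l := by
    have : (Finset.range n).filter (fun k => n < k + l) ⊆ Finset.Ico (n - l) n := fun k hk => by
      simp only [Finset.mem_filter, Finset.mem_range, Finset.mem_Ico] at hk ⊢
      omega
    exact (Finset.card_le_card this).trans (by rw [Nat.card_Ico]; omega)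
  have sum_sub : |∑ k ∈ Finset.range n, (a n k - c)| ≤ l * (K + |c|) := by
    rw [← Finset.sum_filter_of_ne (p := fun k => n < k + l) fun k _ hk => by
      by_contra h
      exact hk (by rw [hc n k (not_lt.1 h), sub_self])]
    calc _ ≤ _ := Finset.abs_sum_le_sum_abs _ _
      _ ≤ _ := Finset.sum_le_card_nsmul _ _ (K + |c|) fun k _ =>
          (abs_sub _ _).trans (add_le_add_left (hK n k) _)
      _ ≤ _ := by
          rw [nsmul_eq_mul]
          exact mul_le_mul_of_nonneg_right (Nat.cast_le.2 card)
            (add_nonneg ((abs_nonneg _).trans (hK 0 0)) (abs_nonneg _))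
  have hn' : (0 : ℝ) < n := Nat.cast_pos.2 hn
  have average_sub : (∑ k ∈ Finset.range n, a n k) / n - c =
      (∑ k ∈ Finset.range n, (a n k - c)) / n := by
    rw [Finset.sum_sub_distrib, Finset.sum_const, Finset.card_range, nsmul_eq_mul]
    field_simp
  rw [average_sub, norm_div, Real.norm_of_nonneg hn'.le, Real.norm_eq_abs]
  exact div_le_div_of_nonneg_right sum_sub hn'.le

lemma tendsto_blockProb_shiftAverage [MeasurableSingletonClass A] {m : ℕ → Measure (ℕ → A)}
    (hm : ∀ n, IsProbabilityMeasure (m n)) {l : ℕ} {w : Fin l → A} {c : ℝ}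
    (hc : ∀ n k, k + l ≤ n → blockProb (m n) k w = c) :
    Tendsto (fun n => blockProb (shiftAverage (m n) n) 0 w) atTop (𝓝 c) := by
  simp only [blockProb_shiftAverage, zero_add]
  exact tendsto_average_of_eventually_const (K := 1)
    (fun n k => by
      rw [abs_of_nonneg (blockProb_nonneg _ _ _)]
      exact blockProb_le_one _ _ _) hc

lemma shiftAverage_eq_one_of_shiftMap_image_subset {X : Set (ℕ → A)} (hX : MeasurableSet X)
    (hXs : shiftMap '' X ⊆ X) {m : Measure (ℕ → A)} [IsProbabilityMeasure m] (hm : m X = 1)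
    (n : ℕ) [NeZero n] : shiftAverage m n X = 1 :=
  shiftAverage_eq_one hX fun k => le_antisymm prob_le_one <| hm.ge.trans <|
    measure_mono (Set.mapsTo_iff_image_subset.2 hXs |>.iterate k)

lemma map_shiftMap_eq_of_tendsto_shiftAverage [Finite A] [MeasurableSingletonClass A]
    {m : ℕ → Measure (ℕ → A)} (hm : ∀ n, IsProbabilityMeasure (m n)) {F : Filter ℕ} [F.NeBot]
    (hF : F ≤ atTop) {μ : Measure (ℕ → A)} [IsFiniteMeasure μ]
    (h : ∀ (i l : ℕ) (w : Fin l → A),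
      Tendsto (fun n => blockProb (shiftAverage (m n) n) i w) F (𝓝 (blockProb μ i w))) :
    μ.map shiftMap = μ := by
  refine ext_of_blockProb fun l w => ?_
  rw [← Function.iterate_one (shiftMap (A := A)), blockProb_map_shiftMap_iterate, ← sub_eq_zero]
  refine tendsto_nhds_unique ((h (0 + 1) l w).sub (h 0 l w)) (squeeze_zero_norm (fun n => ?_)
    ((tendsto_const_nhds (x := (1 : ℝ))).div_atTop (tendsto_natCast_atTop_atTop.mono_left hF)))
  rw [blockProb_shiftAverage, blockProb_shiftAverage, ← sub_div, ← Finset.sum_sub_distrib]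
  simp only [zero_add, add_comm 1]
  rw [Finset.sum_range_sub fun k => blockProb (m n) k w, norm_div,
    Real.norm_of_nonneg (Nat.cast_nonneg (α := ℝ) n), Real.norm_eq_abs]
  refine div_le_div_of_nonneg_right (abs_le.2 ⟨?_, ?_⟩) (Nat.cast_nonneg n) <;>
    linarith [blockProb_nonneg (m n) n w, blockProb_le_one (m n) n w,
      blockProb_nonneg (m n) 0 w, blockProb_le_one (m n) 0 w]

end ShiftAverage

theorem exists_tendsto_blockProb_shiftAverage {A : Type} [Finite A] [TopologicalSpace A]
    [DiscreteTopology A] [MeasurableSpace A] [BorelSpace A] {X : Set (ℕ → A)} (hX : IsClosed X)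
    (hXs : shiftMap '' X ⊆ X) {m : ℕ → Measure (ℕ → A)} (hm : ∀ n, IsProbabilityMeasure (m n))
    (hmX : ∀ n, m n X = 1) :
    ∃ F : Filter ℕ, F ≤ atTop ∧ F.NeBot ∧ ∃ μ, InvOn X μ ∧ ∀ (i l : ℕ) (w : Fin l → A),
      Tendsto (fun n => blockProb (shiftAverage (m n) n) i w) F (𝓝 (blockProb μ i w)) := by
  let P : ℕ → ProbabilityMeasure (ℕ → A) := fun n =>
    ⟨shiftAverage (m (n + 1)) (n + 1), inferInstance⟩
  obtain ⟨μ, -, hμ : Tendsto P (hyperfilter ℕ) (𝓝 μ)⟩ :=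
    isCompact_univ.ultrafilter_le_nhds ((hyperfilter ℕ).map P) (by simp)
  have le_atTop : Filter.map (· + 1) (hyperfilter ℕ : Filter ℕ) ≤ atTop :=
    (tendsto_add_atTop_nat 1).mono_left Nat.hyperfilter_le_atTop
  have limit : ∀ (i l : ℕ) (w : Fin l → A),
      Tendsto (fun n => blockProb (shiftAverage (m n) n) i w)
        (Filter.map (· + 1) (hyperfilter ℕ : Filter ℕ))
        (𝓝 (blockProb (μ : Measure (ℕ → A)) i w)) := fun i l w => by
    rw [tendsto_map'_iff]
    exact (((continuous_blockProb i w).tendsto μ).comp hμ).congr fun _ => rfl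
  have full : ∀ n, (P n : Measure (ℕ → A)) X = 1 := fun n =>
    shiftAverage_eq_one_of_shiftMap_image_subset hX.measurableSet hXs (hmX (n + 1)) (n + 1)
  refine ⟨_, le_atTop, inferInstance, μ, ⟨inferInstance,
    map_shiftMap_eq_of_tendsto_shiftAverage hm le_atTop limit, le_antisymm prob_le_one ?_⟩, limit⟩
  simpa only [full, limsup_const] using
    ProbabilityMeasure.limsup_measure_closed_le_of_tendsto hμ hX

section Lift

variable {A : Type} [Fintype A] [MeasurableSpace A] [MeasurableSingletonClass A]
  {f : List A → ℝ} {C : ℝ}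

lemma sum_blockEnergy_eq_shiftAverage (f : List A → ℝ) (m : Measure (ℕ → A)) [IsFiniteMeasure m]
    (n l : ℕ) [NeZero n] :
    ∑ k ∈ Finset.range n, blockEnergy f m k l = n * blockEnergy f (shiftAverage m n) 0 l := by
  have hn : (n : ℝ) ≠ 0 := Nat.cast_ne_zero.2 (NeZero.ne n)
  simp only [blockEnergy, blockProb_shiftAverage, zero_add, Finset.mul_sum (a := (n : ℝ)),
    ← mul_assoc, mul_div_cancel₀ _ hn, Finset.sum_mul]
  exact Finset.sum_comm

lemma sum_blockEntropy_le_shiftAverage (m : Measure (ℕ → A)) [IsFiniteMeasure m] (n l : ℕ)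
    [NeZero n] :
    ∑ k ∈ Finset.range n, blockEntropy m k l ≤ n * blockEntropy (shiftAverage m n) 0 l := by
  have hn : (0 : ℝ) < n := Nat.cast_pos.2 (NeZero.pos n)
  simp only [blockEntropy, blockProb_shiftAverage, zero_add, Finset.mul_sum]
  rw [Finset.sum_comm]
  refine Finset.sum_le_sum fun w _ => ?_
  have jensen := Real.concaveOn_negMulLog.le_map_sum (t := Finset.range n)
    (w := fun _ => (n : ℝ)⁻¹) (p := fun k => blockProb m k w) (fun _ _ => by positivity)
    (by simp [hn.ne']) (fun _ _ => blockProb_nonneg _ _ _)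
  simp only [smul_eq_mul, ← div_eq_inv_mul, ← Finset.sum_div] at jensen
  rwa [div_le_iff₀' hn] at jensen

lemma mul_energy_add_entropy_le_shiftAverage (hf : SubmultWeight f C) (m : Measure (ℕ → A))
    [IsProbabilityMeasure m] {n l : ℕ} [NeZero n] (hln : l ≤ n) (h : FiniteEnergyAt f m 0 n)
    {K : ℝ} (hK : ∀ i p, p ≤ l → |blockEnergy f m i p + blockEntropy m i p| ≤ K) :
    l * (blockEnergy f m 0 n + blockEntropy m 0 n) ≤
      n * (blockEnergy f (shiftAverage m n) 0 l + blockEntropy (shiftAverage m n) 0 l) + n * C +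
        l * (5 * K + C) := by
  refine (mul_le_sum_of_subadditive (a := fun i p => blockEnergy f m i p + blockEntropy m i p) hln
    hf.const_nonneg (fun i p q hi => ?_) hK).trans ?_
  · linarith [blockEnergy_add_le hf (h.sub_block hf (k := i) (l := p + q) (by omega)),
      blockEntropy_add_le m i p q]
  · rw [Finset.sum_add_distrib, sum_blockEnergy_eq_shiftAverage]
    linarith [sum_blockEntropy_le_shiftAverage m n l]

lemma exists_abs_energy_add_entropy_le (f : List A → ℝ) (l : ℕ) :
    ∃ K, ∀ m : Measure (ℕ → A), IsProbabilityMeasure m → ∀ i p, p ≤ l →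
      |blockEnergy f m i p + blockEntropy m i p| ≤ K := by
  set bound : ℕ → ℝ := fun p =>
    (∑ w : Fin p → A, |Real.log (f (List.ofFn w))|) + |Real.log (Fintype.card (Fin p → A))|
  refine ⟨∑ p ∈ Finset.range (l + 1), bound p, fun m _ i p hp => ?_⟩
  have bound_nonneg : ∀ p, 0 ≤ bound p := fun p => by positivity
  refine (abs_add_le _ _).trans (le_trans (add_le_add (abs_blockEnergy_le m i p f) ?_)
    (Finset.single_le_sum (fun p _ => bound_nonneg p) (Finset.mem_range.2 (by omega : p < l + 1))))
  rw [abs_of_nonneg (blockEntropy_nonneg m i p)]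
  exact (blockEntropy_le m i p).trans (le_abs_self _)

lemma mul_le_energy_add_entropy_of_tendsto (hf : SubmultWeight f C) {m : ℕ → Measure (ℕ → A)}
    (hm : ∀ n, IsProbabilityMeasure (m n)) (hmf : ∀ n, FiniteEnergyAt f (m n) 0 n) {r D : ℝ}
    (hr : ∀ n : ℕ, 0 < n → n * r ≤ blockEnergy f (m n) 0 n + blockEntropy (m n) 0 n + D)
    {F : Filter ℕ} [F.NeBot] (hF : F ≤ atTop) {μ : Measure (ℕ → A)} {l : ℕ}
    (h : ∀ w : Fin l → A,
      Tendsto (fun n => blockProb (shiftAverage (m n) n) 0 w) F (𝓝 (blockProb μ 0 w))) :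
    l * r ≤ blockEnergy f μ 0 l + blockEntropy μ 0 l + C := by
  obtain ⟨K, hK⟩ := exists_abs_energy_add_entropy_le f l
  have limit : Tendsto (fun n : ℕ => blockEnergy f (shiftAverage (m n) n) 0 l +
      blockEntropy (shiftAverage (m n) n) 0 l + C + l * (5 * K + C + D) / n) F
      (𝓝 (blockEnergy f μ 0 l + blockEntropy μ 0 l + C + 0)) :=
    (((tendsto_finsetSum _ fun w _ => (h w).mul_const _).add
      (tendsto_finsetSum _ fun w _ => (Real.continuous_negMulLog.tendsto _).comp (h w))).add_const
        C).add (tendsto_const_nhds.div_atTop (tendsto_natCast_atTop_atTop.mono_left hF))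
  rw [add_zero] at limit
  refine ge_of_tendsto limit (hF ?_)
  filter_upwards [eventually_ge_atTop l, eventually_gt_atTop 0] with n hln hn
  have : NeZero n := ⟨hn.ne'⟩
  have hn' : (0 : ℝ) < n := Nat.cast_pos.2 hn
  rw [← sub_le_iff_le_add', le_div_iff₀ hn']
  linarith [mul_energy_add_entropy_le_shiftAverage hf (m n) hln (hmf n) (hK (m n) (hm n)),
    mul_le_mul_of_nonneg_left (hr n hn) (Nat.cast_nonneg (α := ℝ) l)]

end Lift

section Language

variable {A B : Type} {X : Set (ℕ → A)}

lemma lang_nil (hX : X.Nonempty) : Lang X [] :=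
  ⟨hX.some, fun i => i.elim0, hX.some_mem⟩

lemma lang_ofFn_block {x : ℕ → A} (hx : x ∈ X) (n : ℕ) : Lang X (List.ofFn (block 0 n x)) :=
  ⟨x, by rw [cyl_ofFn]; rfl, hx⟩

lemma lang_of_lang_append (hX : shiftMap '' X ⊆ X) {I J : List A} (h : Lang X (I ++ J)) :
    Lang X I ∧ Lang X J := by
  obtain ⟨n, u, rfl⟩ : ∃ n, ∃ u : Fin n → A, I = List.ofFn u := ⟨_, I.get, by simp⟩
  obtain ⟨m, v, rfl⟩ : ∃ m, ∃ v : Fin m → A, J = List.ofFn v := ⟨_, J.get, by simp⟩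
  obtain ⟨x, hx, hxX⟩ := h
  rw [← List.ofFn_fin_append, cyl_ofFn, block_preimage_append] at hx
  refine ⟨⟨x, ?_, hxX⟩, shiftMap^[n] x, ?_, (Set.mapsTo_iff_image_subset.2 hX).iterate n hxX⟩
  · rw [cyl_ofFn]
    exact hx.1
  · rw [cyl_ofFn, Set.mem_preimage, block_shiftMap_iterate]
    exact hx.2

/-- The word function `φ` cut off to the language of `X`: words outside the language, on which the
values of a potential on `X` do not depend, get weight `0`. -/
noncomputable def langRestrict (X : Set (ℕ → A)) (φ : List A → ℝ) (I : List A) : ℝ :=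
  if Lang X I then φ I else 0

lemma exists_submultWeight_langRestrict {φ : List A → ℝ} (hX : X.Nonempty)
    (hXs : shiftMap '' X ⊆ X) (hφ : Submult X φ) : ∃ C, SubmultWeight (langRestrict X φ) C := by
  obtain ⟨hφ0, hnil, c, hc, happend⟩ := hφ
  have nonneg : ∀ I, 0 ≤ langRestrict X φ I := fun I => by
    unfold langRestrict
    split_ifs with h
    exacts [hφ0 I h, le_rfl]
  refine ⟨max 0 (Real.log c⁻¹), nonneg, by simp [langRestrict, lang_nil hX, hnil],
    le_max_left _ _, fun I J => ?_⟩
  by_cases h : Lang X (I ++ J)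
  · obtain ⟨hI, hJ⟩ := lang_of_lang_append hXs h
    simp only [langRestrict, h, hI, hJ, if_true]
    refine (happend I J h).trans ?_
    gcongr
    · exact hφ0 J hJ
    · exact hφ0 I hI
    · exact (Real.log_le_iff_le_exp (inv_pos.2 hc)).1 (le_max_right _ _)
  · rw [langRestrict, if_neg h]
    exact mul_nonneg (mul_nonneg (Real.exp_nonneg _) (nonneg I)) (nonneg J)

lemma finiteEnergy_fiberSum_langRestrict_one [Fintype A] [MeasurableSpace B] {Y : Set (ℕ → B)}
    {π : A → B} (hπ : Y ⊆ blockMap π '' X) (hY : MeasurableSet Y) {ν : Measure (ℕ → B)}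
    (hν : InvOn Y ν) : FiniteEnergy (fiberSum π (langRestrict X fun _ => 1)) ν := by
  intro n v hv
  have := hν.1
  rw [fiberSum_ofFn, Finset.sum_eq_zero_iff_of_nonneg fun w _ => by
    unfold langRestrict; positivity] at hv
  rw [blockProb, measureReal_eq_zero_iff, measure_eq_zero_iff_ae_notMem]
  filter_upwards [hν.ae_mem hY] with y hy hyv
  obtain ⟨x, hx, rfl⟩ := hπ hy
  have := hv (block 0 n x) (Finset.mem_filter.2 ⟨Finset.mem_univ _, hyv⟩)
  simp [langRestrict, lang_ofFn_block hx] at this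

end Language

section LiftMeasure

variable {A B : Type} [Fintype A] [TopologicalSpace A] [DiscreteTopology A] [MeasurableSpace A]
  [BorelSpace A] [Fintype B] [MeasurableSpace B] [MeasurableSingletonClass B] {X : Set (ℕ → A)}
  {Y : Set (ℕ → B)} {π : A → B} {f : List A → ℝ} {C : ℝ} {ν : Measure (ℕ → B)}

lemma exists_lift_PhiStar_add_ent_le_of_finiteEnergy (hX : IsSubshift X) (hY : MeasurableSet Y)
    (hf : SubmultWeight f C) (hfX : ∀ I, f I ≠ 0 → Lang X I) (hν : InvOn Y ν)
    (hE : FiniteEnergy (fiberSum π f) ν) :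
    ∃ μ, InvOn X μ ∧ μ.map (blockMap π) = ν ∧
      PhiStar ν (genPot (fiberSum π f)) + ent Y ν ≤ PhiStar μ (genPot f) + ent X μ := by
  obtain ⟨hX0, hXc, hXs⟩ := hX
  have hXm := hXc.measurableSet
  have := hν.1
  choose m hm hmX hmν hmf hmE using fun n =>
    exists_lift_energy_add_entropy_eq π hX0 hXm hf.nonneg hfX (hE n)
  obtain ⟨F, hF, _, μ, hμ, hlim⟩ := exists_tendsto_blockProb_shiftAverage hXc.isClosed hXs hm hmX
  have := hμ.1
  have finiteEnergy : FiniteEnergy f μ := fun l w hw =>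
    tendsto_nhds_unique (hlim 0 l w) <| (tendsto_blockProb_shiftAverage hm fun n k hk =>
      (hmf n).sub_block hf hk w hw).mono_left hF
  have isProbability : ∀ n, IsProbabilityMeasure ((m n).map (blockMap π)) := fun n =>
    Measure.isProbabilityMeasure_map (measurable_blockMap π).aemeasurable
  have map_eq : μ.map (blockMap π) = ν := ext_of_blockProb fun l v => by
    have marginal := tendsto_blockProb_shiftAverage isProbability (w := v) fun n k hk =>
      (blockProb_eq_of_forall_initial (hmν n) hk v).trans (blockProb_eq_zero_index hν.2.1 k v)
    rw [blockProb_map_blockMap]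
    refine tendsto_nhds_unique (tendsto_finsetSum _ fun w _ => hlim 0 l w)
      ((marginal.mono_left hF).congr fun n => ?_)
    simp only [blockProb_shiftAverage, blockProb_map_blockMap, ← Finset.sum_div]
    rw [Finset.sum_comm]
  refine ⟨μ, hμ, map_eq, EReal.ge_of_forall_gt_iff_ge.1 fun r hr => ?_⟩
  rw [PhiStar_add_ent_eq_growthRate hY hν (fiberSum_submultWeight π hf) hE] at hr
  rw [PhiStar_add_ent_eq_growthRate hXm hμ hf finiteEnergy, coe_le_growthRate_iff]
  refine fun l _ => mul_le_energy_add_entropy_of_tendsto hf hm hmf (D := C) (fun n hn => ?_) hF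
    (hlim 0 l)
  rw [hmE]
  exact coe_le_growthRate_iff.1 hr.le n hn

/-- When `PhiStar ν (genPot (fiberSum π f)) = ⊥` the inequality is void, but some invariant lift
still has to exist: take the one obtained from the weight `1` on the language. -/
theorem exists_lift_PhiStar_add_ent_le (hX : IsSubshift X) (hY : MeasurableSet Y)
    (hπ : Y ⊆ blockMap π '' X) (hf : SubmultWeight f C) (hfX : ∀ I, f I ≠ 0 → Lang X I)
    (hν : InvOn Y ν) :
    ∃ μ, InvOn X μ ∧ μ.map (blockMap π) = ν ∧
      PhiStar ν (genPot (fiberSum π f)) + ent Y ν ≤ PhiStar μ (genPot f) + ent X μ := by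
  have := hν.1
  by_cases hE : FiniteEnergy (fiberSum π f) ν
  · exact exists_lift_PhiStar_add_ent_le_of_finiteEnergy hX hY hf hfX hν hE
  · have submult_one : Submult X fun _ => 1 :=
      ⟨fun _ _ => zero_le_one, rfl, 1, one_pos, fun _ _ _ => by norm_num⟩
    obtain ⟨C, hC⟩ := exists_submultWeight_langRestrict hX.1 hX.2.2 submult_one
    obtain ⟨μ, hμ, map_eq, -⟩ := exists_lift_PhiStar_add_ent_le_of_finiteEnergy hX hY hC
      (fun I h => not_not.1 fun h' => h (if_neg h')) hν
      (finiteEnergy_fiberSum_langRestrict_one hπ hY hν)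
    exact ⟨μ, hμ, map_eq, by simp [PhiStar_eq_bot (fiberSum_submultWeight π hf) hE]⟩

end LiftMeasure

/-! ### Convex combinations of invariant measures -/

section Mixture

variable {Ω Ω' : Type*} [MeasurableSpace Ω] [MeasurableSpace Ω'] {t : ℝ} {μ₁ μ₂ : Measure Ω}

/-- The convex combination `t μ₁ + (1 - t) μ₂` of measures, meant for `t ∈ [0, 1]`. -/
noncomputable def mixture (t : ℝ) (μ₁ μ₂ : Measure Ω) : Measure Ω :=
  ENNReal.ofReal t • μ₁ + ENNReal.ofReal (1 - t) • μ₂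

lemma mixture_self (h0 : 0 ≤ t) (h1 : t ≤ 1) (μ : Measure Ω) : mixture t μ μ = μ := by
  rw [mixture, ← add_smul, ← ENNReal.ofReal_add h0 (sub_nonneg.2 h1), add_sub_cancel,
    ENNReal.ofReal_one, one_smul]

lemma mixture_zero (μ₁ μ₂ : Measure Ω) : mixture 0 μ₁ μ₂ = μ₂ := by simp [mixture]

lemma mixture_one (μ₁ μ₂ : Measure Ω) : mixture 1 μ₁ μ₂ = μ₁ := by simp [mixture]

lemma map_mixture {g : Ω → Ω'} (hg : Measurable g) :
    (mixture t μ₁ μ₂).map g = mixture t (μ₁.map g) (μ₂.map g) := by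
  simp only [mixture, Measure.map_add _ _ hg, Measure.map_smul]

lemma mixture_real_apply [IsFiniteMeasure μ₁] [IsFiniteMeasure μ₂] (h0 : 0 ≤ t) (h1 : t ≤ 1)
    (s : Set Ω) : (mixture t μ₁ μ₂).real s = t * μ₁.real s + (1 - t) * μ₂.real s := by
  rw [mixture, measureReal_add_apply (ENNReal.mul_ne_top ENNReal.ofReal_ne_top (measure_ne_top _ _))
    (ENNReal.mul_ne_top ENNReal.ofReal_ne_top (measure_ne_top _ _))]
  simp [measureReal_ennreal_smul_apply, h0, h1]

lemma isProbabilityMeasure_mixture [IsProbabilityMeasure μ₁] [IsProbabilityMeasure μ₂]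
    (h0 : 0 ≤ t) (h1 : t ≤ 1) : IsProbabilityMeasure (mixture t μ₁ μ₂) := by
  constructor
  simp [mixture, ← ENNReal.ofReal_add h0 (sub_nonneg.2 h1)]

/-- `V` respects the convex combinations of probability measures in `S`. -/
def IsAffineOn (S : Set (ProbabilityMeasure Ω)) (V : ProbabilityMeasure Ω → EReal) : Prop :=
  ∀ μ₁ ∈ S, ∀ μ₂ ∈ S, ∀ t : ℝ, 0 < t → t < 1 → ∀ μ : ProbabilityMeasure Ω,
    (μ : Measure Ω) = mixture t μ₁ μ₂ → V μ = t * V μ₁ + ((1 - t : ℝ) : EReal) * V μ₂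

end Mixture

section InvariantMixture

variable {A : Type} [MeasurableSpace A] {X : Set (ℕ → A)} {t : ℝ} {μ₁ μ₂ : Measure (ℕ → A)}

lemma InvOn.mixture (h0 : 0 ≤ t) (h1 : t ≤ 1) (hμ₁ : InvOn X μ₁) (hμ₂ : InvOn X μ₂) :
    InvOn X (mixture t μ₁ μ₂) := by
  obtain ⟨_, inv₁, full₁⟩ := hμ₁
  obtain ⟨_, inv₂, full₂⟩ := hμ₂
  refine ⟨isProbabilityMeasure_mixture h0 h1, ?_, ?_⟩
  · rw [map_mixture measurable_shiftMap, inv₁, inv₂]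
  · simp [_root_.mixture, full₁, full₂, ← ENNReal.ofReal_add h0 (sub_nonneg.2 h1)]

section Rates

variable [IsProbabilityMeasure μ₁] [IsProbabilityMeasure μ₂]

lemma blockProb_mixture (h0 : 0 ≤ t) (h1 : t ≤ 1) (i : ℕ) {n : ℕ} (w : Fin n → A) :
    blockProb (mixture t μ₁ μ₂) i w = t * blockProb μ₁ i w + (1 - t) * blockProb μ₂ i w :=
  mixture_real_apply h0 h1 _

lemma finiteEnergy_mixture_iff {f : List A → ℝ} (h0 : 0 < t) (h1 : t < 1) :
    FiniteEnergy f (mixture t μ₁ μ₂) ↔ FiniteEnergy f μ₁ ∧ FiniteEnergy f μ₂ := by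
  have eq_zero_iff : ∀ {n} (w : Fin n → A), blockProb (mixture t μ₁ μ₂) 0 w = 0 ↔
      blockProb μ₁ 0 w = 0 ∧ blockProb μ₂ 0 w = 0 := fun w => by
    rw [blockProb_mixture h0.le h1.le, add_eq_zero_iff_of_nonneg
      (mul_nonneg h0.le (blockProb_nonneg _ _ _))
      (mul_nonneg (sub_nonneg.2 h1.le) (blockProb_nonneg _ _ _))]
    simp [h0.ne', sub_ne_zero.2 h1.ne']
  simp only [FiniteEnergy, FiniteEnergyAt, eq_zero_iff, imp_and, forall_and]

variable [Fintype A]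

lemma blockEnergy_mixture (h0 : 0 ≤ t) (h1 : t ≤ 1) (f : List A → ℝ) (n : ℕ) :
    blockEnergy f (mixture t μ₁ μ₂) 0 n =
      t * blockEnergy f μ₁ 0 n + (1 - t) * blockEnergy f μ₂ 0 n := by
  simp only [blockEnergy, blockProb_mixture h0 h1, Finset.mul_sum, ← Finset.sum_add_distrib]
  exact Finset.sum_congr rfl fun w _ => by ring

lemma le_blockEntropy_mixture (h0 : 0 ≤ t) (h1 : t ≤ 1) (n : ℕ) :
    t * blockEntropy μ₁ 0 n + (1 - t) * blockEntropy μ₂ 0 n ≤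
      blockEntropy (mixture t μ₁ μ₂) 0 n := by
  simp only [blockEntropy, blockProb_mixture h0 h1, Finset.mul_sum, ← Finset.sum_add_distrib]
  exact Finset.sum_le_sum fun w _ => Real.concaveOn_negMulLog.2 (blockProb_nonneg _ _ _)
    (blockProb_nonneg _ _ _) h0 (sub_nonneg.2 h1) (add_sub_cancel _ _)

lemma negMulLog_add_le {x y : ℝ} (hx : 0 ≤ x) (hy : 0 ≤ y) :
    Real.negMulLog (x + y) ≤ Real.negMulLog x + Real.negMulLog y := by
  rcases hx.eq_or_lt with rfl | hx
  · simp
  rcases hy.eq_or_lt with rfl | hy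
  · simp
  have log_x_le := Real.log_le_log hx (by linarith : x ≤ x + y)
  have log_y_le := Real.log_le_log hy (by linarith : y ≤ x + y)
  unfold Real.negMulLog
  nlinarith

/-- Choosing the component of a mixture costs at most the entropy of the choice. -/
lemma blockEntropy_mixture_le [MeasurableSingletonClass A] (h0 : 0 ≤ t) (h1 : t ≤ 1) (n : ℕ) :
    blockEntropy (mixture t μ₁ μ₂) 0 n ≤ t * blockEntropy μ₁ 0 n + (1 - t) * blockEntropy μ₂ 0 n +
      (Real.negMulLog t + Real.negMulLog (1 - t)) := by
  have choice : Real.negMulLog t + Real.negMulLog (1 - t) = ∑ w : Fin n → A,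
      (blockProb μ₁ 0 w * Real.negMulLog t + blockProb μ₂ 0 w * Real.negMulLog (1 - t)) := by
    rw [Finset.sum_add_distrib, ← Finset.sum_mul, ← Finset.sum_mul, sum_blockProb, sum_blockProb,
      one_mul, one_mul]
  simp only [choice, blockEntropy, blockProb_mixture h0 h1, Finset.mul_sum,
    ← Finset.sum_add_distrib]
  refine Finset.sum_le_sum fun w _ => (negMulLog_add_le
    (mul_nonneg h0 (blockProb_nonneg _ _ _))
    (mul_nonneg (sub_nonneg.2 h1) (blockProb_nonneg _ _ _))).trans_eq ?_
  rw [Real.negMulLog_mul, Real.negMulLog_mul]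
  ring

end Rates

variable [MeasurableSingletonClass A]

lemma ent_mixture [Fintype A] (hX : MeasurableSet X) (h0 : 0 ≤ t) (h1 : t ≤ 1) (hμ₁ : InvOn X μ₁)
    (hμ₂ : InvOn X μ₂) : ent X (mixture t μ₁ μ₂) = t * ent X μ₁ + (1 - t) * ent X μ₂ := by
  have := hμ₁.1
  have := hμ₂.1
  have limit := tendsto_blockEntropy_div hX (hμ₁.mixture h0 h1 hμ₂)
  have lower : Tendsto (fun n : ℕ => (t * blockEntropy μ₁ 0 n + (1 - t) * blockEntropy μ₂ 0 n) / n)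
      atTop (𝓝 (t * ent X μ₁ + (1 - t) * ent X μ₂)) :=
    (((tendsto_blockEntropy_div hX hμ₁).const_mul t).add
      ((tendsto_blockEntropy_div hX hμ₂).const_mul (1 - t))).congr fun n => by ring
  have upper := lower.add
    (tendsto_const_div_atTop_nhds_zero_nat (Real.negMulLog t + Real.negMulLog (1 - t)))
  rw [add_zero] at upper
  refine le_antisymm (le_of_tendsto_of_tendsto' limit upper fun n => ?_)
    (le_of_tendsto_of_tendsto' lower limit fun n => ?_)
  · rw [← add_div]
    gcongr
    exact blockEntropy_mixture_le h0 h1 n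
  · gcongr
    exact le_blockEntropy_mixture h0 h1 n

lemma ereal_coe_mul_ne_top {r : ℝ} (hr : 0 < r) {x : EReal} (hx : x ≠ ⊤) : (r : EReal) * x ≠ ⊤ := by
  induction x with
  | bot => simp [EReal.coe_mul_bot_of_pos hr]
  | coe x => exact EReal.coe_ne_top _
  | top => exact absurd rfl hx

lemma PhiStar_mixture [Finite A] {f : List A → ℝ} {C : ℝ} (hf : SubmultWeight f C) (h0 : 0 < t)
    (h1 : t < 1) (hμ₁ : InvOn X μ₁) (hμ₂ : InvOn X μ₂) :
    PhiStar (mixture t μ₁ μ₂) (genPot f) =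
      t * PhiStar μ₁ (genPot f) + ((1 - t : ℝ) : EReal) * PhiStar μ₂ (genPot f) := by
  cases nonempty_fintype A
  have ht : 0 < 1 - t := sub_pos.2 h1
  obtain ⟨_, inv, -⟩ := hμ₁.mixture h0.le h1.le hμ₂
  obtain ⟨_, inv₁, -⟩ := hμ₁
  obtain ⟨_, inv₂, -⟩ := hμ₂
  by_cases hE : FiniteEnergy f (mixture t μ₁ μ₂)
  · obtain ⟨hE₁, hE₂⟩ := (finiteEnergy_mixture_iff h0 h1).1 hE
    rw [PhiStar_eq_growthRate inv hf hE, PhiStar_eq_growthRate inv₁ hf hE₁,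
      PhiStar_eq_growthRate inv₂ hf hE₂]
    have limit₁ := EReal.Tendsto.const_mul (a := (t : EReal))
      (tendsto_growthRate (blockEnergy_subadditive inv₁ hf hE₁)) (by simp) (by simp)
    have limit₂ := EReal.Tendsto.const_mul (a := ((1 - t : ℝ) : EReal))
      (tendsto_growthRate (blockEnergy_subadditive inv₂ hf hE₂))
      (.inl (EReal.coe_ne_bot _)) (.inl (EReal.coe_ne_top _))
    have limit := (EReal.continuousAt_add
      (.inl (ereal_coe_mul_ne_top h0 (growthRate_ne_top (blockEnergy f μ₁ 0) C)))
      (.inr (ereal_coe_mul_ne_top ht (growthRate_ne_top (blockEnergy f μ₂ 0) C)))).tendsto.comp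
        (limit₁.prodMk_nhds limit₂)
    refine tendsto_nhds_unique (tendsto_growthRate (blockEnergy_subadditive inv hf hE))
      (limit.congr fun n => ?_)
    simp only [Function.comp_apply, blockEnergy_mixture h0.le h1.le, ← EReal.coe_mul,
      ← EReal.coe_add]
    congr 1
    ring
  · rw [PhiStar_eq_bot hf hE]
    rw [finiteEnergy_mixture_iff h0 h1, not_and_or] at hE
    rcases hE with hE | hE
    · rw [PhiStar_eq_bot hf hE, EReal.coe_mul_bot_of_pos h0, EReal.bot_add]
    · rw [PhiStar_eq_bot hf hE, EReal.coe_mul_bot_of_pos ht, EReal.add_bot]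

end InvariantMixture

/-! ### Upper semicontinuity and the space of invariant measures -/

section Semicontinuity

variable {A : Type} [TopologicalSpace A] [DiscreteTopology A] [MeasurableSpace A]
  [BorelSpace A] {X : Set (ℕ → A)}

omit [TopologicalSpace A] [DiscreteTopology A] [BorelSpace A] in
lemma mem_MInv_iff {μ : ProbabilityMeasure (ℕ → A)} : μ ∈ MInv X ↔ InvOn X (μ : Measure (ℕ → A)) :=
  ⟨fun h => ⟨inferInstance, h.1, h.2⟩, fun h => h.2⟩

lemma isClosed_setOf_measure_eq_one {Ω : Type*} [TopologicalSpace Ω] [HasOuterApproxClosed Ω]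
    [MeasurableSpace Ω] [OpensMeasurableSpace Ω] {F : Set Ω} (hF : IsClosed F) :
    IsClosed {μ : ProbabilityMeasure Ω | (μ : Measure Ω) F = 1} := by
  refine isClosed_iff_ultrafilter.2 fun μ u hu hs => ?_
  have full : ∀ᶠ ν : ProbabilityMeasure Ω in u, (ν : Measure Ω) F = 1 := hs
  refine le_antisymm prob_le_one (le_trans ?_
    (ProbabilityMeasure.limsup_measure_closed_le_of_tendsto (tendsto_id'.2 hu) hF))
  exact ((limsup_congr full).trans (limsup_const _)).ge

lemma isClosed_MInv [Finite A] (hX : IsClosed X) : IsClosed (MInv X) := by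
  have invariant_iff : ∀ μ : ProbabilityMeasure (ℕ → A),
      (μ : Measure (ℕ → A)).map shiftMap = μ ↔ ∀ n (w : Fin n → A),
        blockProb (μ : Measure (ℕ → A)) 1 w = blockProb (μ : Measure (ℕ → A)) 0 w := fun μ => by
    refine ⟨fun h n w => blockProb_eq_zero_index h 1 w, fun h => ?_⟩
    have := Measure.isProbabilityMeasure_map (μ := (μ : Measure (ℕ → A)))
      measurable_shiftMap.aemeasurable
    refine ext_of_blockProb fun n w => (h n w ▸ ?_)
    exact blockProb_map_shiftMap_iterate _ 0 1 w
  have MInv_eq : MInv X = (⋂ (n : ℕ) (w : Fin n → A), {μ : ProbabilityMeasure (ℕ → A) |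
      blockProb (μ : Measure (ℕ → A)) 1 w = blockProb (μ : Measure (ℕ → A)) 0 w}) ∩
        {μ | (μ : Measure (ℕ → A)) X = 1} := by
    ext μ
    simp only [Set.mem_inter_iff, Set.mem_iInter, Set.mem_ofPred_eq, ← invariant_iff]
    rfl
  rw [MInv_eq]
  exact (isClosed_iInter fun n => isClosed_iInter fun w => isClosed_eq (continuous_blockProb 1 w)
    (continuous_blockProb 0 w)).inter (isClosed_setOf_measure_eq_one hX)

lemma nonempty_MInv [Finite A] (hX : IsSubshift X) : (MInv X).Nonempty := by
  obtain ⟨⟨x, hx⟩, hXc, hXs⟩ := hX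
  obtain ⟨-, -, -, μ, hμ, -⟩ := exists_tendsto_blockProb_shiftAverage hXc.isClosed hXs
    (m := fun _ => Measure.dirac x) (fun _ => inferInstance) (fun _ => by simp [hx])
  exact ⟨⟨μ, hμ.1⟩, mem_MInv_iff.2 hμ⟩

lemma upperSemicontinuous_growthRate {α : Type*} [TopologicalSpace α] {w : α → ℕ → ℝ}
    (hw : ∀ n, Continuous fun x => w x n) (C : ℝ) :
    UpperSemicontinuous fun x => growthRate (w x) C :=
  upperSemicontinuous_biInf fun n _ => (continuous_coe_real_ereal.comp
    (((hw n).add continuous_const).div_const _)).upperSemicontinuous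

lemma upperSemicontinuousOn_PhiStar [Finite A] {f : List A → ℝ} {C : ℝ} (hf : SubmultWeight f C) :
    UpperSemicontinuousOn
      (fun μ : ProbabilityMeasure (ℕ → A) => PhiStar (μ : Measure (ℕ → A)) (genPot f))
      (MInv X) := by
  cases nonempty_fintype A
  intro μ hμ y (hy : PhiStar (μ : Measure (ℕ → A)) (genPot f) < y)
  by_cases hE : FiniteEnergy f (μ : Measure (ℕ → A))
  · rw [PhiStar_eq_growthRate hμ.1 hf hE] at hy
    filter_upwards [mem_nhdsWithin_of_mem_nhds (upperSemicontinuous_growthRate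
      (fun n => continuous_blockEnergy f 0 n) C μ y hy), self_mem_nhdsWithin] with η hηy hη
    by_cases hE' : FiniteEnergy f (η : Measure (ℕ → A))
    · rwa [PhiStar_eq_growthRate hη.1 hf hE']
    · rw [PhiStar_eq_bot hf hE']
      exact bot_le.trans_lt hηy
  · rw [PhiStar_eq_bot hf hE] at hy
    filter_upwards [mem_nhdsWithin_of_mem_nhds
      ((isClosed_setOf_finiteEnergy f).isOpen_compl.mem_nhds hE)] with η hη
    rwa [PhiStar_eq_bot hf hη]

lemma upperSemicontinuousOn_ent [Fintype A] (hX : MeasurableSet X) :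
    UpperSemicontinuousOn (fun μ : ProbabilityMeasure (ℕ → A) => ent X (μ : Measure (ℕ → A)))
      (MInv X) := by
  intro μ hμ y hy
  rw [← EReal.coe_lt_coe_iff, ent_eq_growthRate hX (mem_MInv_iff.1 hμ)] at hy
  filter_upwards [mem_nhdsWithin_of_mem_nhds (upperSemicontinuous_growthRate
    (fun n => continuous_blockEntropy 0 n) 0 μ y hy), self_mem_nhdsWithin] with η hηy hη
  rwa [← EReal.coe_lt_coe_iff, ent_eq_growthRate hX (mem_MInv_iff.1 hη)]

end Semicontinuity

/-! ### Sets of maximizers -/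

section Maximizers

/-- The points of `S` at which `V` attains its supremum over `S`. -/
def maximizers {M β : Type*} [CompleteLattice β] (S : Set M) (V : M → β) : Set M :=
  {μ | μ ∈ S ∧ V μ = ⨆ η ∈ S, V η}

variable {M β : Type*} {S : Set M}

lemma mem_maximizers_iff [CompleteLattice β] {V : M → β} {μ : M} :
    μ ∈ maximizers S V ↔ μ ∈ S ∧ ∀ η ∈ S, V η ≤ V μ := by
  refine and_congr_right fun hμ => ⟨fun h η hη => h ▸ le_iSup₂ (f := fun η _ => V η) η hη,
    fun h => le_antisymm (le_iSup₂ (f := fun η _ => V η) μ hμ) (iSup₂_le h)⟩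

lemma maximizers_congr [CompleteLattice β] {V W : M → β} (h : Set.EqOn V W S) :
    maximizers S V = maximizers S W := by
  ext μ
  simp only [mem_maximizers_iff]
  exact and_congr_right fun hμ => forall₂_congr fun η hη => by rw [h hη, h hμ]

variable [TopologicalSpace M] {V : M → EReal}

lemma nonempty_maximizers (hS : IsCompact S) (hne : S.Nonempty) (hV : UpperSemicontinuousOn V S) :
    (maximizers S V).Nonempty :=
  let ⟨μ, hμ, hmax⟩ := hV.exists_isMaxOn hne hS
  ⟨μ, mem_maximizers_iff.2 ⟨hμ, fun _ hη => hmax hη⟩⟩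

lemma isCompact_maximizers (hS : IsCompact S) (hV : UpperSemicontinuousOn V S) :
    IsCompact (maximizers S V) := by
  convert hV.isCompact_inter_preimage_Ici hS (⨆ η ∈ S, V η) using 1
  ext μ
  exact and_congr_right fun hμ => (le_iSup₂ (f := fun η _ => V η) μ hμ).ge_iff_eq.symm

end Maximizers

section AffineMaximizers

variable {Ω : Type*} [MeasurableSpace Ω] {S : Set (ProbabilityMeasure Ω)}
  {V : ProbabilityMeasure Ω → EReal} {μ : ProbabilityMeasure Ω}

lemma ereal_convex_combination_self {t : ℝ} (h0 : 0 ≤ t) (h1 : t ≤ 1) (s : EReal) :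
    (t : EReal) * s + ((1 - t : ℝ) : EReal) * s = s := by
  rw [← EReal.right_distrib_of_nonneg (EReal.coe_nonneg.2 h0)
    (EReal.coe_nonneg.2 (sub_nonneg.2 h1)), ← EReal.coe_add, add_sub_cancel, EReal.coe_one, one_mul]

lemma ereal_eq_of_convex_combination_eq {t : ℝ} (h0 : 0 < t) (h1 : t < 1) {s x y : EReal}
    (hs : s ≠ ⊤) (h : s = t * x + ((1 - t : ℝ) : EReal) * y) (hx : x ≤ s) (hy : y ≤ s) :
    x = s ∧ y = s := by
  have h1t : 0 < 1 - t := by linarith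
  induction s with
  | bot => exact ⟨le_bot_iff.1 hx, le_bot_iff.1 hy⟩
  | top => exact absurd rfl hs
  | coe s =>
    induction x with
    | top => simp at hx
    | bot => simp [EReal.coe_mul_bot_of_pos h0] at h
    | coe x =>
      induction y with
      | top => simp at hy
      | bot => rw [EReal.coe_mul_bot_of_pos h1t] at h; simp at h
      | coe y =>
        norm_cast at *
        constructor <;> nlinarith

lemma isExtremePM_singleton (μ : ProbabilityMeasure Ω) :
    IsExtremePM {μ} μ :=
  ⟨rfl, fun _ h₁ _ h₂ _ _ _ _ => h₁.trans h₂.symm⟩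

lemma convexPM_maximizers (hS : ConvexPM S) (hV : IsAffineOn S V) : ConvexPM (maximizers S V) := by
  intro μ₁ h₁ μ₂ h₂ t h0 h1 μ (hμ : _ = mixture t _ _)
  rcases h0.eq_or_lt with rfl | h0
  · rwa [Subtype.ext (hμ.trans (mixture_zero _ _))]
  rcases h1.eq_or_lt with rfl | h1
  · rwa [Subtype.ext (hμ.trans (mixture_one _ _))]
  refine ⟨hS μ₁ h₁.1 μ₂ h₂.1 t h0.le h1.le μ hμ, ?_⟩
  rw [hV μ₁ h₁.1 μ₂ h₂.1 t h0 h1 μ hμ, h₁.2, h₂.2, ereal_convex_combination_self h0.le h1.le]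

lemma IsExtremePM.of_maximizers (hV : IsAffineOn S V) (htop : ∀ μ ∈ S, V μ ≠ ⊤)
    (h : IsExtremePM (maximizers S V) μ) : IsExtremePM S μ := by
  obtain ⟨hμ, hext⟩ := h
  obtain ⟨hμS, hmax⟩ := mem_maximizers_iff.1 hμ
  refine ⟨hμS, fun μ₁ h₁ μ₂ h₂ t h0 h1 hmix => ?_⟩
  obtain ⟨eq₁, eq₂⟩ := ereal_eq_of_convex_combination_eq h0 h1 (htop μ hμS)
    (hV μ₁ h₁ μ₂ h₂ t h0 h1 μ hmix) (hmax μ₁ h₁) (hmax μ₂ h₂)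
  exact hext μ₁ ⟨h₁, eq₁.trans hμ.2⟩ μ₂ ⟨h₂, eq₂.trans hμ.2⟩ t h0 h1 hmix

end AffineMaximizers

section InvariantMeasures

variable {A : Type} [MeasurableSpace A] {X : Set (ℕ → A)}

lemma convexPM_MInv : ConvexPM (MInv X) := fun _ h₁ _ h₂ _ h0 h1 μ (hμ : _ = mixture _ _ _) => by
  rw [mem_MInv_iff, hμ]
  exact (mem_MInv_iff.1 h₁).mixture h0 h1 (mem_MInv_iff.1 h₂)

lemma IsExtremePM.ergodic (hX : MeasurableSet X) {μ : ProbabilityMeasure (ℕ → A)}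
    (h : IsExtremePM (MInv X) μ) : Ergodic shiftMap (μ : Measure (ℕ → A)) := by
  have mem_of_absolutelyContinuous : ∀ ν : ProbabilityMeasure (ℕ → A),
      MeasurePreserving shiftMap (ν : Measure (ℕ → A)) ν → (ν : Measure (ℕ → A)) ≪ μ →
        ν ∈ MInv X := fun ν hν hac =>
    ⟨hν.map_eq, (prob_compl_eq_zero_iff hX).1 (hac ((prob_compl_eq_zero_iff hX).2 h.1.2))⟩
  refine .of_mem_extremePoints ⟨⟨⟨measurable_shiftMap, h.1.1⟩, inferInstance⟩, ?_⟩
  rintro ν₁ ⟨hν₁, _⟩ ν₂ ⟨hν₂, _⟩ ⟨a, b, ha, hb, hab, hμ⟩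
  have ha_top : a ≠ ⊤ := ne_top_of_le_ne_top ENNReal.one_ne_top (hab ▸ le_self_add)
  obtain ⟨t, h0, rfl⟩ : ∃ t : ℝ, 0 < t ∧ ENNReal.ofReal t = a :=
    ⟨a.toReal, ENNReal.toReal_pos ha.ne' ha_top, ENNReal.ofReal_toReal ha_top⟩
  obtain rfl : b = ENNReal.ofReal (1 - t) := by
    rw [ENNReal.ofReal_sub _ h0.le, ENNReal.ofReal_one, ← hab,
      ENNReal.add_sub_cancel_left ENNReal.ofReal_ne_top]
  have h1 : t < 1 := sub_pos.1 (ENNReal.ofReal_pos.1 hb)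
  have ac₁ : ν₁ ≪ μ := hμ ▸ (Measure.absolutelyContinuous_smul ha.ne').add_right _
  have ac₂ : ν₂ ≪ μ := by
    rw [← hμ, add_comm]
    exact (Measure.absolutelyContinuous_smul hb.ne').add_right _
  have hν : ν₁ = ν₂ := congrArg Subtype.val <|
    h.2 ⟨ν₁, ‹_›⟩ (mem_of_absolutelyContinuous _ hν₁ ac₁) ⟨ν₂, ‹_›⟩
      (mem_of_absolutelyContinuous _ hν₂ ac₂) t h0 h1 hμ.symm
  rw [← hμ, ← hν]
  exact (mixture_self h0.le h1.le ν₁).symm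

end InvariantMeasures

section FiberwiseMaximizers

variable {M N β γ : Type*} [CompleteLattice β] [CompleteLattice γ] {S : Set M} {R : Set N}
  {p : M → N} {V : M → β} {T : N → β}

lemma maximizers_comp_of_le_iff_le {g : β → γ} (hg : ∀ x y, g x ≤ g y ↔ x ≤ y) :
    maximizers S (g ∘ V) = maximizers S V := by
  ext μ
  simp only [mem_maximizers_iff, Function.comp_apply, hg]

lemma mem_maximizers_fiber {μ : M} (hle : ∀ μ ∈ S, V μ ≤ T (p μ)) (hμ : μ ∈ S)
    (hT : T (p μ) ≤ V μ) : μ ∈ maximizers (S ∩ p ⁻¹' {p μ}) V :=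
  mem_maximizers_iff.2 ⟨⟨hμ, rfl⟩, fun η hη => (hle η hη.1).trans ((congrArg T hη.2).trans_le hT)⟩

lemma mem_maximizers_iff_fiberwise (hp : Set.MapsTo p S R) (hle : ∀ μ ∈ S, V μ ≤ T (p μ))
    (hlift : ∀ ν ∈ R, ∃ μ ∈ S, p μ = ν ∧ T ν ≤ V μ) {g : N → β → γ}
    (hg : ∀ ν x y, g ν x ≤ g ν y ↔ x ≤ y) {μ : M} :
    μ ∈ maximizers S (fun η => g (p η) (V η)) ↔
      p μ ∈ maximizers R (fun ν => g ν (T ν)) ∧ μ ∈ maximizers (S ∩ p ⁻¹' {p μ}) V := by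
  simp only [mem_maximizers_iff]
  constructor
  · rintro ⟨hμ, hmax⟩
    refine ⟨⟨hp hμ, fun ν hν => ?_⟩, ⟨hμ, rfl⟩, ?_⟩
    · obtain ⟨η, hη, rfl, hT⟩ := hlift ν hν
      exact ((hg _ _ _).2 hT).trans ((hmax η hη).trans ((hg _ _ _).2 (hle μ hμ)))
    · rintro η ⟨hη, hpη : p η = p μ⟩
      exact (hg (p μ) _ _).1 (hpη ▸ hmax η hη)
  · rintro ⟨⟨-, hbase⟩, ⟨hμ, -⟩, hfiber⟩
    refine ⟨hμ, fun η hη => ?_⟩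
    obtain ⟨μ', hμ', hpμ', hT⟩ := hlift (p μ) (hp hμ)
    exact ((hg _ _ _).2 (hle η hη)).trans
      ((hbase _ (hp hη)).trans ((hg _ _ _).2 (hT.trans (hfiber μ' ⟨hμ', hpμ'⟩))))

end FiberwiseMaximizers

/-! ### The weighted pressure -/

section WeightedPressure

variable {A B : Type} [MeasurableSpace A] [MeasurableSpace B] {X : Set (ℕ → A)}
  {Y : Set (ℕ → B)} {π : A → B}

lemma isAffineOn_wVal2 [Fintype A] [Fintype B] [MeasurableSingletonClass A]
    [MeasurableSingletonClass B] (hX : MeasurableSet X) (hY : MeasurableSet Y)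
    (hπ : Set.MapsTo (blockMap π) X Y) {f : List A → ℝ} {C : ℝ} (hf : SubmultWeight f C)
    (a₁ a₂ : ℝ) : IsAffineOn (MInv X) (wVal2 X Y π (genPot f) a₁ a₂) := by
  intro μ₁ h₁ μ₂ h₂ t h0 h1 μ hμ
  rw [mem_MInv_iff] at h₁ h₂
  simp only [wVal2, pushM, hμ, PhiStar_mixture hf h0 h1 h₁ h₂, ent_mixture hX h0.le h1.le h₁ h₂,
    map_mixture (measurable_blockMap π),
    ent_mixture hY h0.le h1.le (h₁.map_blockMap hπ hY) (h₂.map_blockMap hπ hY)]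
  rw [EReal.left_distrib_of_nonneg_of_ne_top (EReal.coe_nonneg.2 h0.le) (EReal.coe_ne_top _),
    EReal.left_distrib_of_nonneg_of_ne_top (EReal.coe_nonneg.2 (sub_nonneg.2 h1.le))
      (EReal.coe_ne_top _), add_add_add_comm, ← EReal.coe_mul, ← EReal.coe_mul, ← EReal.coe_add]
  congr 2
  ring

lemma wVal2_ne_top [Fintype A] [Fintype B] [MeasurableSingletonClass A] {f : List A → ℝ} {C : ℝ}
    (hf : SubmultWeight f C) (a₁ a₂ : ℝ) {μ : ProbabilityMeasure (ℕ → A)} (hμ : μ ∈ MInv X) :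
    wVal2 X Y π (genPot f) a₁ a₂ μ ≠ ⊤ :=
  EReal.add_ne_top (PhiStar_ne_top hμ.1 hf) (EReal.coe_ne_top _)

/-- The push-forward `μ ∘ π⁻¹`, bundled as a probability measure; see `pushM`. -/
noncomputable def pushPM [Countable A] [MeasurableSingletonClass A] (π : A → B)
    (μ : ProbabilityMeasure (ℕ → A)) : ProbabilityMeasure (ℕ → B) :=
  μ.map (measurable_blockMap π).aemeasurable

lemma mapsTo_pushPM_MInv [Countable A] [MeasurableSingletonClass A]
    (hπ : Set.MapsTo (blockMap π) X Y) (hY : MeasurableSet Y) :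
    Set.MapsTo (pushPM π) (MInv X) (MInv Y) := fun _ hμ =>
  mem_MInv_iff.2 ((mem_MInv_iff.1 hμ).map_blockMap hπ hY)

lemma pushM_eq_coe_iff [Countable A] [MeasurableSingletonClass A] {μ : ProbabilityMeasure (ℕ → A)}
    {ν : ProbabilityMeasure (ℕ → B)} : pushM π μ = (ν : Measure (ℕ → B)) ↔ pushPM π μ = ν :=
  ⟨fun h => Subtype.ext h, fun h => congrArg Subtype.val h⟩

lemma upperSemicontinuousOn_wVal2 [Fintype A] [TopologicalSpace A] [DiscreteTopology A]
    [BorelSpace A] [Fintype B] [TopologicalSpace B] [DiscreteTopology B] [BorelSpace B]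
    (hX : MeasurableSet X) (hY : MeasurableSet Y) (hπ : Set.MapsTo (blockMap π) X Y)
    {f : List A → ℝ} {C : ℝ} (hf : SubmultWeight f C) {a₁ a₂ : ℝ} (ha₁ : 0 ≤ a₁) (ha₂ : 0 ≤ a₂) :
    UpperSemicontinuousOn (wVal2 X Y π (genPot f) a₁ a₂) (MInv X) := by
  have smul_usc : ∀ {a : ℝ} {h : ProbabilityMeasure (ℕ → A) → ℝ}, 0 ≤ a →
      UpperSemicontinuousOn h (MInv X) → UpperSemicontinuousOn (fun μ => a * h μ) (MInv X) :=
    fun {a _} ha hh => (continuous_const_mul a).comp_upperSemicontinuousOn hh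
      (monotone_mul_left_of_nonneg ha)
  have ent_push : UpperSemicontinuousOn (fun μ => ent Y (pushM π μ)) (MInv X) :=
    (upperSemicontinuousOn_ent hY).comp (g := pushPM π)
      (ProbabilityMeasure.continuous_map (continuous_blockMap π)).continuousOn
      (mapsTo_pushPM_MInv hπ hY)
  have entropies := (smul_usc ha₁ (upperSemicontinuousOn_ent hX)).add (smul_usc ha₂ ent_push)
  exact (upperSemicontinuousOn_PhiStar hf).add'
    (continuous_coe_real_ereal.comp_upperSemicontinuousOn entropies
      EReal.coe_strictMono.monotone)
    fun μ _ => EReal.continuousAt_add (.inr (EReal.coe_ne_bot _)) (.inr (EReal.coe_ne_top _))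

end WeightedPressure

/-! ### A Krein-Milman criterion -/

section KreinMilman

variable {A : Type} [MeasurableSpace A]

/-- The probabilities of all cylinders based at `0`, as a point of a locally convex space; it
transports affine and topological questions about measures on `ℕ → A` to that space. -/
noncomputable def cylinderProbs (μ : ProbabilityMeasure (ℕ → A)) : (Σ n, Fin n → A) → ℝ :=
  fun w => blockProb (μ : Measure (ℕ → A)) 0 w.2

lemma cylinderProbs_injective [Finite A] [MeasurableSingletonClass A] :
    Function.Injective (cylinderProbs (A := A)) := fun μ ν h =>
  Subtype.ext (ext_of_blockProb (μ := (μ : Measure (ℕ → A))) (ν := ν)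
    fun n w => congrFun h ⟨n, w⟩)

lemma continuous_cylinderProbs [Finite A] [TopologicalSpace A] [DiscreteTopology A]
    [BorelSpace A] : Continuous (cylinderProbs (A := A)) :=
  continuous_pi fun w => continuous_blockProb 0 w.2

lemma cylinderProbs_eq_of_eq_mixture {μ μ₁ μ₂ : ProbabilityMeasure (ℕ → A)} {t : ℝ} (h0 : 0 ≤ t)
    (h1 : t ≤ 1) (h : (μ : Measure (ℕ → A)) = mixture t μ₁ μ₂) :
    cylinderProbs μ = t • cylinderProbs μ₁ + (1 - t) • cylinderProbs μ₂ := by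
  ext w
  rw [cylinderProbs, h, blockProb_mixture h0 h1]
  rfl

lemma ConvexPM.convex_image_cylinderProbs {S : Set (ProbabilityMeasure (ℕ → A))}
    (hS : ConvexPM S) : Convex ℝ (cylinderProbs '' S) := by
  rintro _ ⟨μ₁, h₁, rfl⟩ _ ⟨μ₂, h₂, rfl⟩ a b ha hb hab
  obtain rfl : b = 1 - a := by linarith
  have ha1 : a ≤ 1 := by linarith
  let μ : ProbabilityMeasure (ℕ → A) := ⟨mixture a μ₁ μ₂, isProbabilityMeasure_mixture ha ha1⟩
  exact ⟨μ, hS μ₁ h₁ μ₂ h₂ a ha ha1 μ rfl, cylinderProbs_eq_of_eq_mixture ha ha1 rfl⟩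

lemma IsExtremePM.of_cylinderProbs_mem_extremePoints [Finite A] [MeasurableSingletonClass A]
    {S : Set (ProbabilityMeasure (ℕ → A))} {μ : ProbabilityMeasure (ℕ → A)} (hμ : μ ∈ S)
    (h : cylinderProbs μ ∈ (cylinderProbs '' S).extremePoints ℝ) : IsExtremePM S μ := by
  refine ⟨hμ, fun μ₁ h₁ μ₂ h₂ t h0 h1 hmix => cylinderProbs_injective ?_⟩
  obtain ⟨eq₁, eq₂⟩ := (mem_extremePoints.1 h).2 _ ⟨μ₁, h₁, rfl⟩ _ ⟨μ₂, h₂, rfl⟩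
    ⟨t, 1 - t, h0, sub_pos.2 h1, by ring,
      (cylinderProbs_eq_of_eq_mixture h0.le h1.le hmix).symm⟩
  exact eq₁.trans eq₂.symm

lemma eq_singleton_of_isExtremePM_eq [Finite A] [TopologicalSpace A] [DiscreteTopology A]
    [BorelSpace A] {S : Set (ProbabilityMeasure (ℕ → A))} (hS : IsCompact S)
    (hconv : ConvexPM S) (hne : S.Nonempty) {η : ProbabilityMeasure (ℕ → A)}
    (hη : ∀ μ, IsExtremePM S μ → μ = η) : S = {η} := by
  have extremePoints_subset : (cylinderProbs '' S).extremePoints ℝ ⊆ {cylinderProbs η} := by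
    rintro x hx
    obtain ⟨μ, hμ, rfl⟩ := hx.1
    rw [hη μ (.of_cylinderProbs_mem_extremePoints hμ hx), Set.mem_singleton_iff]
  have image_subset : cylinderProbs '' S ⊆ {cylinderProbs η} := by
    rw [← closure_convexHull_extremePoints (hS.image continuous_cylinderProbs)
      hconv.convex_image_cylinderProbs]
    exact closure_minimal (convexHull_min extremePoints_subset (convex_singleton _))
      isClosed_singleton
  exact Set.eq_singleton_iff_nonempty_unique_mem.2
    ⟨hne, fun μ hμ => cylinderProbs_injective (image_subset ⟨μ, hμ, rfl⟩)⟩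

end KreinMilman

/-! ### Equilibrium states and conditional equilibrium states -/

section Reduction

variable {A B : Type} {X : Set (ℕ → A)} {π : A → B} {φ : List A → ℝ} {a : ℝ}

/-- The word function `φ ^ (1/a)` on the language of `X`, extended by zero to all words; it
generates the potential `(1/a)Φ`. -/
noncomputable def langRoot (X : Set (ℕ → A)) (φ : List A → ℝ) (a : ℝ) (I : List A) : ℝ :=
  langRestrict X φ I ^ a⁻¹

lemma lang_of_langRoot_ne_zero (ha : a ≠ 0) {I : List A} (h : langRoot X φ a I ≠ 0) :
    Lang X I := by
  by_contra hI
  exact h (by rw [langRoot, langRestrict, if_neg hI, Real.zero_rpow (inv_ne_zero ha)])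

lemma exists_submultWeight_langRoot (hX : X.Nonempty) (hXs : shiftMap '' X ⊆ X)
    (hφ : Submult X φ) (ha : 0 ≤ a) : ∃ C, SubmultWeight (langRoot X φ a) C :=
  let ⟨_, hC⟩ := exists_submultWeight_langRestrict hX hXs hφ
  ⟨_, hC.rpow (inv_nonneg.2 ha)⟩

lemma langRoot_rpow (hφ : ∀ I, Lang X I → 0 ≤ φ I) (ha : a ≠ 0) (I : List A) :
    langRoot X φ a I ^ a = langRestrict X φ I := by
  refine Real.rpow_inv_rpow ?_ ha
  rw [langRestrict]
  split_ifs with h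
  exacts [hφ I h, le_rfl]

lemma phiTwo_eq_fiberSum_rpow [Fintype A] (ha : a ≠ 0) (J : List B) :
    phiTwo X π φ a J = fiberSum π (langRoot X φ a) J ^ a := by
  rw [phiTwo, fiberSum, Finset.sum_filter]
  congr 1
  refine Finset.sum_congr rfl fun w _ => ?_
  by_cases hw : Lang X (List.ofFn w) <;>
    simp [langRoot, langRestrict, hw, Real.zero_rpow (inv_ne_zero ha)]

lemma genPot_langRestrict {x : ℕ → A} (hx : x ∈ X) (n : ℕ) :
    genPot (langRestrict X φ) n x = genPot φ n x := by
  rw [genPot, langRestrict, wordOf_eq_ofFn_block, if_pos (lang_ofFn_block hx n), genPot,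
    wordOf_eq_ofFn_block]

variable [MeasurableSpace A] [MeasurableSpace B] {Y : Set (ℕ → B)} {a₁ a₂ : ℝ}

lemma wVal2_langRestrict [Fintype A] [Fintype B] (hX : MeasurableSet X) :
    Set.EqOn (wVal2 X Y π (genPot φ) a₁ a₂) (wVal2 X Y π (genPot (langRestrict X φ)) a₁ a₂)
      (MInv X) := fun μ hμ => by
  rw [wVal2, wVal2, PhiStar_congr fun n => ?_]
  filter_upwards [(mem_MInv_iff.1 hμ).ae_mem hX] with x hx using (genPot_langRestrict hx n).symm

lemma wEqSet2_eq_maximizers [Fintype A] [Fintype B] (hX : MeasurableSet X) :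
    WEqSet2 X Y π (genPot φ) a₁ a₂ =
      maximizers (MInv X) (wVal2 X Y π (genPot (langRestrict X φ)) a₁ a₂) :=
  maximizers_congr (wVal2_langRestrict hX)

lemma eqVal_scPot_inv [Fintype A] (hX : MeasurableSet X) :
    Set.EqOn (eqVal X (scPot a⁻¹ (genPot φ))) (eqVal X (genPot (langRoot X φ a))) (MInv X) :=
  fun μ hμ => by
  rw [eqVal, eqVal, PhiStar_congr fun n => ?_]
  filter_upwards [(mem_MInv_iff.1 hμ).ae_mem hX] with x hx
    using congrArg (· ^ a⁻¹) (genPot_langRestrict hx n).symm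

lemma condEqSet_scPot_inv [Fintype A] [MeasurableSingletonClass A] (hX : MeasurableSet X)
    (ν : ProbabilityMeasure (ℕ → B)) :
    CondEqSet X π (scPot a⁻¹ (genPot φ)) (ν : Measure (ℕ → B)) =
      maximizers (MInv X ∩ pushPM π ⁻¹' {ν}) (eqVal X (genPot (langRoot X φ a))) := by
  have fiber_eq : {η | η ∈ MInv X ∧ pushM π η = (ν : Measure (ℕ → B))} =
      MInv X ∩ pushPM π ⁻¹' {ν} := Set.ext fun η => and_congr_right fun _ => pushM_eq_coe_iff
  rw [← maximizers_congr ((eqVal_scPot_inv hX).mono Set.inter_subset_left), ← fiber_eq]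
  exact Set.ext fun μ => and_assoc.symm

end Reduction

section TwoStepMaximization

lemma ereal_mul_add_le_iff {a : ℝ} (ha : 0 < a) (r : ℝ) (x y : EReal) :
    (a : EReal) * x + r ≤ a * y + r ↔ x ≤ y := by
  rw [(EReal.addLECancellable_coe r).add_le_add_iff_right]
  refine ⟨fun h => ?_, fun h => mul_le_mul_of_nonneg_left h (EReal.coe_nonneg.2 ha.le)⟩
  have hinv := mul_le_mul_of_nonneg_left h (EReal.coe_nonneg.2 (inv_pos.2 ha).le)
  rwa [← mul_assoc, ← mul_assoc, ← EReal.coe_mul, inv_mul_cancel₀ ha.ne', EReal.coe_one, one_mul,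
    one_mul] at hinv

variable {A B : Type} [Fintype A] [MeasurableSpace A] [Fintype B] [MeasurableSpace B]
  {X : Set (ℕ → A)} {Y : Set (ℕ → B)} {π : A → B} {φ : List A → ℝ} {a₁ a₂ : ℝ}

/-- The value `a₁ x + a₂ h_ν` of the weighted functional on measures over `ν` whose pressure for
`(1/a₁)Φ` is `x`. -/
noncomputable def weightedValue (Y : Set (ℕ → B)) (a₁ a₂ : ℝ) (ν : ProbabilityMeasure (ℕ → B))
    (x : EReal) : EReal :=
  a₁ * x + ((a₂ * ent Y (ν : Measure (ℕ → B)) : ℝ) : EReal)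

lemma weightedValue_le_iff (ha₁ : 0 < a₁) (ν : ProbabilityMeasure (ℕ → B)) (x y : EReal) :
    weightedValue Y a₁ a₂ ν x ≤ weightedValue Y a₁ a₂ ν y ↔ x ≤ y :=
  ereal_mul_add_le_iff ha₁ _ x y

lemma wVal2_eq_weightedValue [MeasurableSingletonClass A] (hX : MeasurableSet X)
    (hφ : ∀ I, Lang X I → 0 ≤ φ I) {C : ℝ} (hf : SubmultWeight (langRoot X φ a₁) C) (ha₁ : 0 < a₁) :
    Set.EqOn (wVal2 X Y π (genPot φ) a₁ a₂)
      (fun μ => weightedValue Y a₁ a₂ (pushPM π μ) (eqVal X (genPot (langRoot X φ a₁)) μ))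
      (MInv X) := fun μ hμ => by
  have PhiStar_eq : PhiStar (μ : Measure (ℕ → A)) (genPot (langRestrict X φ)) =
      a₁ * PhiStar (μ : Measure (ℕ → A)) (genPot (langRoot X φ a₁)) := by
    rw [← PhiStar_rpow hμ.1 hf ha₁, funext (langRoot_rpow hφ ha₁.ne')]
  dsimp only
  rw [wVal2_langRestrict hX hμ, wVal2, PhiStar_eq, weightedValue, eqVal,
    EReal.left_distrib_of_nonneg_of_ne_top (EReal.coe_nonneg.2 ha₁.le) (EReal.coe_ne_top _),
    add_assoc, EReal.coe_add, EReal.coe_mul]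
  rfl

omit [MeasurableSpace A] in
lemma add_mul_eqVal_phiTwo [MeasurableSingletonClass B] {C : ℝ}
    (hf : SubmultWeight (langRoot X φ a₁) C) (ha₁ : 0 < a₁) (ha₂ : 0 ≤ a₂) :
    Set.EqOn (fun ν => ((a₁ + a₂ : ℝ) : EReal) *
        eqVal Y (scPot (a₁ + a₂)⁻¹ (genPot (phiTwo X π φ a₁))) ν)
      (fun ν => weightedValue Y a₁ a₂ ν (eqVal Y (genPot (fiberSum π (langRoot X φ a₁))) ν))
      (MInv Y) := fun ν hν => by
  have hψ := fiberSum_submultWeight π hf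
  have ha : 0 < a₁ + a₂ := by positivity
  have potential_eq : scPot (a₁ + a₂)⁻¹ (genPot (phiTwo X π φ a₁)) =
      genPot (fun J : List B => fiberSum π (langRoot X φ a₁) J ^ (a₁ * (a₁ + a₂)⁻¹)) := by
    funext n y
    rw [scPot, genPot, phiTwo_eq_fiberSum_rpow ha₁.ne', ← Real.rpow_mul (hψ.nonneg _), genPot]
  dsimp only
  rw [eqVal, potential_eq, PhiStar_rpow hν.1 hψ (by positivity), weightedValue, eqVal,
    EReal.left_distrib_of_nonneg_of_ne_top (EReal.coe_nonneg.2 ha.le) (EReal.coe_ne_top _),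
    EReal.left_distrib_of_nonneg_of_ne_top (EReal.coe_nonneg.2 ha₁.le) (EReal.coe_ne_top _),
    ← mul_assoc, ← EReal.coe_mul, mul_left_comm, mul_inv_cancel₀ ha.ne', mul_one, add_assoc,
    ← EReal.coe_mul, ← EReal.coe_mul, ← EReal.coe_add, add_mul]

omit [MeasurableSpace A] in
lemma eqSet_phiTwo [MeasurableSingletonClass B] {C : ℝ}
    (hf : SubmultWeight (langRoot X φ a₁) C) (ha₁ : 0 < a₁) (ha₂ : 0 ≤ a₂) :
    EqSet Y (scPot (a₁ + a₂)⁻¹ (genPot (phiTwo X π φ a₁))) = maximizers (MInv Y)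
      (fun ν => weightedValue Y a₁ a₂ ν (eqVal Y (genPot (fiberSum π (langRoot X φ a₁))) ν)) := by
  have mul_le_mul_iff : ∀ x y : EReal,
      ((a₁ + a₂ : ℝ) : EReal) * x ≤ ((a₁ + a₂ : ℝ) : EReal) * y ↔ x ≤ y := fun x y => by
    simpa only [EReal.coe_zero, add_zero] using
      ereal_mul_add_le_iff (add_pos_of_pos_of_nonneg ha₁ ha₂) 0 x y
  rw [← maximizers_congr (add_mul_eqVal_phiTwo hf ha₁ ha₂)]
  exact (maximizers_comp_of_le_iff_le mul_le_mul_iff).symm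

end TwoStepMaximization

section WeightedEquilibriumStates

variable {A B : Type} [Fintype A] [TopologicalSpace A] [DiscreteTopology A] [MeasurableSpace A]
  [BorelSpace A] [Fintype B] [MeasurableSpace B] [MeasurableSingletonClass B] {X : Set (ℕ → A)}
  {Y : Set (ℕ → B)} {π : A → B} {φ : List A → ℝ} {a₁ a₂ : ℝ}

lemma eqVal_le_eqVal_pushPM {f : List A → ℝ} {C : ℝ} (hX : MeasurableSet X)
    (hY : MeasurableSet Y) (hπ : Set.MapsTo (blockMap π) X Y) (hf : SubmultWeight f C) :
    ∀ μ ∈ MInv X, eqVal X (genPot f) μ ≤ eqVal Y (genPot (fiberSum π f)) (pushPM π μ) :=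
  fun _ hμ => PhiStar_add_ent_le_map_blockMap hπ hX hY hf (mem_MInv_iff.1 hμ)

lemma exists_mem_MInv_eqVal_ge {f : List A → ℝ} {C : ℝ} (hX : IsSubshift X)
    (hY : MeasurableSet Y) (hπ : Y ⊆ blockMap π '' X) (hf : SubmultWeight f C)
    (hfX : ∀ I, f I ≠ 0 → Lang X I) : ∀ ν ∈ MInv Y, ∃ μ ∈ MInv X, pushPM π μ = ν ∧
      eqVal Y (genPot (fiberSum π f)) ν ≤ eqVal X (genPot f) μ := fun _ hν =>
  let ⟨μ, hμ, hμν, hle⟩ := exists_lift_PhiStar_add_ent_le hX hY hπ hf hfX (mem_MInv_iff.1 hν)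
  ⟨⟨μ, hμ.1⟩, hμ.2, Subtype.ext hμν, hle⟩

omit [Fintype B] in
lemma exists_mem_condEqSet [Finite B] (hX : IsSubshift X) (hY : MeasurableSet Y)
    (hπ : blockMap π '' X = Y) (ha₁ : 0 < a₁) (hφ : Submult X φ) {ν : ProbabilityMeasure (ℕ → B)}
    (hν : ν ∈ MInv Y) :
    ∃ μ, pushPM π μ = ν ∧ μ ∈ CondEqSet X π (scPot a₁⁻¹ (genPot φ)) (ν : Measure (ℕ → B)) := by
  cases nonempty_fintype B
  have hXm : MeasurableSet X := hX.2.1.measurableSet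
  obtain ⟨C, hf⟩ := exists_submultWeight_langRoot hX.1 hX.2.2 hφ ha₁.le
  obtain ⟨μ, hμ, rfl, hle⟩ := exists_mem_MInv_eqVal_ge hX hY hπ.ge hf
    (fun _ => lang_of_langRoot_ne_zero ha₁.ne') ν hν
  refine ⟨μ, rfl, ?_⟩
  rw [condEqSet_scPot_inv hXm]
  exact mem_maximizers_fiber
    (eqVal_le_eqVal_pushPM hXm hY (Set.mapsTo_iff_image_subset.2 hπ.le) hf) hμ hle

theorem mem_wEqSet2_iff (hX : IsSubshift X) (hY : MeasurableSet Y) (hπ : blockMap π '' X = Y)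
    (ha₁ : 0 < a₁) (ha₂ : 0 ≤ a₂) (hφ : Submult X φ) {μ : ProbabilityMeasure (ℕ → A)} :
    μ ∈ WEqSet2 X Y π (genPot φ) a₁ a₂ ↔
      pushPM π μ ∈ EqSet Y (scPot (a₁ + a₂)⁻¹ (genPot (phiTwo X π φ a₁))) ∧
        μ ∈ CondEqSet X π (scPot a₁⁻¹ (genPot φ)) (pushPM π μ : Measure (ℕ → B)) := by
  have hXm : MeasurableSet X := hX.2.1.measurableSet
  have hπ' : Set.MapsTo (blockMap π) X Y := Set.mapsTo_iff_image_subset.2 hπ.le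
  obtain ⟨C, hf⟩ := exists_submultWeight_langRoot hX.1 hX.2.2 hφ ha₁.le
  change μ ∈ maximizers (MInv X) (wVal2 X Y π (genPot φ) a₁ a₂) ↔ _
  rw [maximizers_congr (wVal2_eq_weightedValue hXm hφ.1 hf ha₁), eqSet_phiTwo hf ha₁ ha₂,
    condEqSet_scPot_inv hXm]
  exact mem_maximizers_iff_fiberwise (mapsTo_pushPM_MInv hπ' hY)
    (eqVal_le_eqVal_pushPM hXm hY hπ' hf)
    (exists_mem_MInv_eqVal_ge hX hY hπ.ge hf fun _ => lang_of_langRoot_ne_zero ha₁.ne')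
    (weightedValue_le_iff ha₁)

lemma mem_wEqSet2_of_mem_condEqSet (hX : IsSubshift X) (hY : MeasurableSet Y)
    (hπ : blockMap π '' X = Y) (ha₁ : 0 < a₁) (ha₂ : 0 ≤ a₂) (hφ : Submult X φ)
    {μ : ProbabilityMeasure (ℕ → A)} {ν : ProbabilityMeasure (ℕ → B)}
    (hν : ν ∈ EqSet Y (scPot (a₁ + a₂)⁻¹ (genPot (phiTwo X π φ a₁))))
    (hμ : μ ∈ CondEqSet X π (scPot a₁⁻¹ (genPot φ)) (ν : Measure (ℕ → B))) :
    μ ∈ WEqSet2 X Y π (genPot φ) a₁ a₂ := by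
  obtain rfl : pushPM π μ = ν := pushM_eq_coe_iff.1 hμ.2.1
  exact (mem_wEqSet2_iff hX hY hπ ha₁ ha₂ hφ).2 ⟨hν, hμ⟩

lemma eqSet_phiTwo_eq_singleton (hX : IsSubshift X) (hY : MeasurableSet Y)
    (hπ : blockMap π '' X = Y) (ha₁ : 0 < a₁) (ha₂ : 0 ≤ a₂) (hφ : Submult X φ)
    {μ : ProbabilityMeasure (ℕ → A)} (h : WEqSet2 X Y π (genPot φ) a₁ a₂ = {μ}) :
    EqSet Y (scPot (a₁ + a₂)⁻¹ (genPot (phiTwo X π φ a₁))) = {pushPM π μ} := by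
  have hμ : μ ∈ WEqSet2 X Y π (genPot φ) a₁ a₂ := h ▸ rfl
  refine Set.eq_singleton_iff_unique_mem.2
    ⟨((mem_wEqSet2_iff hX hY hπ ha₁ ha₂ hφ).1 hμ).1, fun ν hν => ?_⟩
  obtain ⟨η, rfl, hη⟩ := exists_mem_condEqSet hX hY hπ ha₁ hφ hν.1
  have hηW := mem_wEqSet2_of_mem_condEqSet hX hY hπ ha₁ ha₂ hφ hν hη
  rw [h] at hηW
  exact congrArg _ hηW

lemma convexPM_wEqSet2 (hX : IsSubshift X) (hY : MeasurableSet Y)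
    (hπ : Set.MapsTo (blockMap π) X Y) (hφ : Submult X φ) :
    ConvexPM (WEqSet2 X Y π (genPot φ) a₁ a₂) := by
  obtain ⟨C, hC⟩ := exists_submultWeight_langRestrict hX.1 hX.2.2 hφ
  rw [wEqSet2_eq_maximizers hX.2.1.measurableSet]
  exact convexPM_maximizers convexPM_MInv
    (isAffineOn_wVal2 hX.2.1.measurableSet hY hπ hC a₁ a₂)

lemma IsExtremePM.ergodic_of_wEqSet2 (hX : IsSubshift X) (hY : MeasurableSet Y)
    (hπ : Set.MapsTo (blockMap π) X Y) (hφ : Submult X φ) {μ : ProbabilityMeasure (ℕ → A)}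
    (h : IsExtremePM (WEqSet2 X Y π (genPot φ) a₁ a₂) μ) :
    Ergodic shiftMap (μ : Measure (ℕ → A)) := by
  have hXm : MeasurableSet X := hX.2.1.measurableSet
  obtain ⟨C, hC⟩ := exists_submultWeight_langRestrict hX.1 hX.2.2 hφ
  rw [wEqSet2_eq_maximizers hXm] at h
  exact (h.of_maximizers (isAffineOn_wVal2 hXm hY hπ hC a₁ a₂)
    fun _ hη => wVal2_ne_top hC a₁ a₂ hη).ergodic hXm

lemma existsUnique_ergodic_mem_condEqSet (hX : IsSubshift X) (hY : MeasurableSet Y)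
    (hπ : blockMap π '' X = Y) (ha₁ : 0 < a₁) (ha₂ : 0 ≤ a₂) (hφ : Submult X φ)
    {μ : ProbabilityMeasure (ℕ → A)} (h : WEqSet2 X Y π (genPot φ) a₁ a₂ = {μ}) :
    ∃! η : ProbabilityMeasure (ℕ → A),
      η ∈ CondEqSet X π (scPot a₁⁻¹ (genPot φ)) (pushPM π μ : Measure (ℕ → B)) ∧
        Ergodic shiftMap (η : Measure (ℕ → A)) := by
  have hμ : μ ∈ WEqSet2 X Y π (genPot φ) a₁ a₂ := h ▸ rfl
  obtain ⟨hν, hcond⟩ := (mem_wEqSet2_iff hX hY hπ ha₁ ha₂ hφ).1 hμ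
  have hμ_ext : IsExtremePM (WEqSet2 X Y π (genPot φ) a₁ a₂) μ := h ▸ isExtremePM_singleton μ
  refine ⟨μ, ⟨hcond, hμ_ext.ergodic_of_wEqSet2 hX hY (Set.mapsTo_iff_image_subset.2 hπ.le) hφ⟩,
    fun η hη => ?_⟩
  have hηW := mem_wEqSet2_of_mem_condEqSet hX hY hπ ha₁ ha₂ hφ hν hη.1
  rwa [h] at hηW

end WeightedEquilibriumStates

section WeightedEquilibriumSet

variable {A B : Type} [Fintype A] [TopologicalSpace A] [DiscreteTopology A] [MeasurableSpace A]
  [BorelSpace A] [Fintype B] [TopologicalSpace B] [DiscreteTopology B] [MeasurableSpace B]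
  [BorelSpace B] {X : Set (ℕ → A)} {Y : Set (ℕ → B)} {π : A → B} {φ : List A → ℝ} {a₁ a₂ : ℝ}

lemma nonempty_wEqSet2 (hX : IsSubshift X) (hY : MeasurableSet Y)
    (hπ : Set.MapsTo (blockMap π) X Y) (ha₁ : 0 ≤ a₁) (ha₂ : 0 ≤ a₂) (hφ : Submult X φ) :
    (WEqSet2 X Y π (genPot φ) a₁ a₂).Nonempty := by
  obtain ⟨C, hC⟩ := exists_submultWeight_langRestrict hX.1 hX.2.2 hφ
  rw [wEqSet2_eq_maximizers hX.2.1.measurableSet]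
  exact nonempty_maximizers (isClosed_MInv hX.2.1.isClosed).isCompact (nonempty_MInv hX)
    (upperSemicontinuousOn_wVal2 hX.2.1.measurableSet hY hπ hC ha₁ ha₂)

lemma isCompact_wEqSet2 (hX : IsSubshift X) (hY : MeasurableSet Y)
    (hπ : Set.MapsTo (blockMap π) X Y) (ha₁ : 0 ≤ a₁) (ha₂ : 0 ≤ a₂) (hφ : Submult X φ) :
    IsCompact (WEqSet2 X Y π (genPot φ) a₁ a₂) := by
  obtain ⟨C, hC⟩ := exists_submultWeight_langRestrict hX.1 hX.2.2 hφ
  rw [wEqSet2_eq_maximizers hX.2.1.measurableSet]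
  exact isCompact_maximizers (isClosed_MInv hX.2.1.isClosed).isCompact
    (upperSemicontinuousOn_wVal2 hX.2.1.measurableSet hY hπ hC ha₁ ha₂)

lemma exists_wEqSet2_eq_singleton (hX : IsSubshift X) (hY : MeasurableSet Y)
    (hπ : blockMap π '' X = Y) (ha₁ : 0 < a₁) (ha₂ : 0 ≤ a₂) (hφ : Submult X φ)
    {ν : ProbabilityMeasure (ℕ → B)}
    (hν : EqSet Y (scPot (a₁ + a₂)⁻¹ (genPot (phiTwo X π φ a₁))) = {ν})
    (hη : ∃! η : ProbabilityMeasure (ℕ → A),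
      η ∈ CondEqSet X π (scPot a₁⁻¹ (genPot φ)) (ν : Measure (ℕ → B)) ∧
        Ergodic shiftMap (η : Measure (ℕ → A))) :
    ∃ μ : ProbabilityMeasure (ℕ → A), WEqSet2 X Y π (genPot φ) a₁ a₂ = {μ} := by
  have hπ' : Set.MapsTo (blockMap π) X Y := Set.mapsTo_iff_image_subset.2 hπ.le
  obtain ⟨η, -, hη_unique⟩ := hη
  refine ⟨η, eq_singleton_of_isExtremePM_eq (isCompact_wEqSet2 hX hY hπ' ha₁.le ha₂ hφ)
    (convexPM_wEqSet2 hX hY hπ' hφ) (nonempty_wEqSet2 hX hY hπ' ha₁.le ha₂ hφ) fun μ hμ => ?_⟩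
  obtain ⟨hbase, hcond⟩ := (mem_wEqSet2_iff hX hY hπ ha₁ ha₂ hφ).1 hμ.1
  obtain rfl : pushPM π μ = ν := Set.mem_singleton_iff.1 (hν ▸ hbase)
  exact hη_unique μ ⟨hcond, hμ.ergodic_of_wEqSet2 hX hY hπ' hφ⟩

end WeightedEquilibriumSet

/-- Corollary 3.4(ii)(iii) / `cor-1.1`(ii)(iii): the set of `a`-weighted
equilibrium states is non-empty compact convex with ergodic extreme points, and it is a
singleton iff `I((1/(a₁+a₂))Φ^{(2)})` is a singleton `{ν}` and `I_ν((1/a₁)Φ)` contains a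
unique ergodic measure. -/
theorem weighted_eq_states_stmt_8 {A B : Type}
    [Fintype A] [TopologicalSpace A] [DiscreteTopology A] [MeasurableSpace A] [BorelSpace A]
    [Fintype B] [TopologicalSpace B] [DiscreteTopology B] [MeasurableSpace B] [BorelSpace B]
    (X : Set (ℕ → A)) (Y : Set (ℕ → B)) (hX : IsSubshift X) (hY : IsSubshift Y)
    (π : A → B) (hπ : blockMap π '' X = Y)
    (a₁ a₂ : ℝ) (ha₁ : 0 < a₁) (ha₂ : 0 ≤ a₂)
    (φ : List A → ℝ) (hφ : Submult X φ) :
    ((WEqSet2 X Y π (genPot φ) a₁ a₂).Nonempty ∧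
      IsCompact (WEqSet2 X Y π (genPot φ) a₁ a₂) ∧
      ConvexPM (WEqSet2 X Y π (genPot φ) a₁ a₂) ∧
      ∀ μ : ProbabilityMeasure (ℕ → A), IsExtremePM (WEqSet2 X Y π (genPot φ) a₁ a₂) μ →
        Ergodic shiftMap (μ : Measure (ℕ → A))) ∧
    ((∃ μ : ProbabilityMeasure (ℕ → A), WEqSet2 X Y π (genPot φ) a₁ a₂ = {μ}) ↔
      ∃ ν : ProbabilityMeasure (ℕ → B),
        EqSet Y (scPot (a₁ + a₂)⁻¹ (genPot (phiTwo X π φ a₁))) = {ν} ∧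
        ∃! η : ProbabilityMeasure (ℕ → A),
          η ∈ CondEqSet X π (scPot a₁⁻¹ (genPot φ)) (ν : Measure (ℕ → B)) ∧
            Ergodic shiftMap (η : Measure (ℕ → A))) := by
  have hYm : MeasurableSet Y := hY.2.1.measurableSet
  have hπ' : Set.MapsTo (blockMap π) X Y := Set.mapsTo_iff_image_subset.2 hπ.le
  refine ⟨⟨nonempty_wEqSet2 hX hYm hπ' ha₁.le ha₂ hφ, isCompact_wEqSet2 hX hYm hπ' ha₁.le ha₂ hφ,
    convexPM_wEqSet2 hX hYm hπ' hφ, fun μ hμ => hμ.ergodic_of_wEqSet2 hX hYm hπ' hφ⟩, ?_, ?_⟩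
  · rintro ⟨μ, hμ⟩
    exact ⟨pushPM π μ, eqSet_phiTwo_eq_singleton hX hYm hπ ha₁ ha₂ hφ hμ,
      existsUnique_ergodic_mem_condEqSet hX hYm hπ ha₁ ha₂ hφ hμ⟩
  · rintro ⟨ν, hν, hη⟩
    exact exists_wEqSet2_eq_singleton hX hYm hπ ha₁ ha₂ hφ hν hη
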